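/- arXiv:1112.5677 — 3 statements merged into one kernel-verified Lean document; each statement's English description precedes it below -/
import Mathlib

section
/- Let 1 ≤ p < 2. Let φ be a real-valued, non-constant, 2π-periodic function of class C^{1,ω}(𝕋). Then there exists a constant c = c(p, φ) > 0 such that for all real λ with |λ| ≥ 1, ‖e^{iλφ}‖_{A_p(𝕋)} ≥ c · |λ|^{1/p} · χ^{-1}(1/|λ|), where χ^{-1} is the inverse function of χ(δ) = δ·ω(δ). -/
open MeasureTheory Real Set
open scoped ENNReal

/-- The k-th Fourier coefficient of a (2π-periodic) function on the circle,
identified with a function on [0, 2π]. -/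
noncomputable def fourierCoef (f : ℝ → ℂ) (k : ℤ) : ℂ :=
  (1 / (2 * (Real.pi : ℂ))) *
    ∫ t in (0:ℝ)..(2 * Real.pi), f t * Complex.exp (-Complex.I * (k : ℂ) * (t : ℂ))

/-- The A_p(𝕋) norm: ℓ^p norm of the sequence of Fourier coefficients
(valued in ℝ≥0∞ so that divergence gives ∞). -/
noncomputable def ApNorm (p : ℝ) (f : ℝ → ℂ) : ℝ≥0∞ :=
  (∑' k : ℤ, ((‖fourierCoef f k‖₊ : ℝ≥0∞) ^ p)) ^ (1 / p)

lemma H_sum0 (x : ℝ) (hx : x ∈ Icc (0:ℝ) 1) :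
    HasSum (fun n : ℤ => 1 / (n:ℂ)^2 * Complex.exp (2 * π * Complex.I * n * x))
      ((2 * π^2 * (x^2 - x + 1/6) : ℝ) : ℂ) := by
  have h := hasSum_one_div_pow_mul_fourier_mul_bernoulliFun (k := 2) le_rfl hx
  have e : bernoulliFun 2 x = x^2 - x + 1/6 := by
    simp [bernoulliFun, Polynomial.bernoulli, Finset.sum_range_succ, bernoulli_eq_bernoulli'_of_ne_one, bernoulli'_two]
    ring
  rw [e] at h
  convert h using 1
  · funext n
    rw [fourier_coe_apply]
    simp
  · push_cast
    rw [mul_pow, Complex.I_sq]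
    simp only [Nat.factorial]
    push_cast
    ring

lemma H_sum (t : ℝ) (ht : |t| ≤ 2 * π) :
    HasSum (fun n : ℤ => 1 / (n:ℂ)^2 * Complex.exp (Complex.I * n * t))
      ((t^2/2 - π*|t| + π^2/3 : ℝ) : ℂ) := by
  have hpi := Real.pi_pos
  have h := H_sum0 (|t| / (2*π)) ⟨by positivity, by rw [div_le_one (by positivity)]; exact ht⟩
  have e1 : 2 * π^2 * ((|t|/(2*π))^2 - |t|/(2*π) + 1/6) = t^2/2 - π*|t| + π^2/3 := by
    rw [← sq_abs t]; field_simp; ring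
  rw [e1] at h
  have e2 : (fun n : ℤ => 1 / (n:ℂ)^2 * Complex.exp (2 * π * Complex.I * n * ((|t| / (2*π) : ℝ) : ℂ)))
     = (fun n : ℤ => 1 / (n:ℂ)^2 * Complex.exp (Complex.I * n * (|t| : ℝ))) := by
    funext n
    congr 2
    have : (π : ℂ) ≠ 0 := by exact_mod_cast hpi.ne'
    push_cast; field_simp
  rw [e2] at h
  rcases abs_choice t with h0 | h0
  · rw [h0] at h ⊢; exact h
  · rw [h0] at h ⊢
    rw [← (Equiv.neg ℤ).hasSum_iff]
    convert h using 1
    funext n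
    simp

/-- Fourier coefficients of the tent. -/
noncomputable def tc (δ : ℝ) (n : ℤ) : ℝ :=
  (1 - Real.cos (n * δ)) / (π * δ * (n:ℝ)^2) + if n = 0 then δ / (2*π) else 0

noncomputable def tent (δ t : ℝ) : ℝ := max 0 (1 - |t| / δ)

lemma tc_nonneg {δ : ℝ} (hδ : 0 < δ) (n : ℤ) : 0 ≤ tc δ n := by
  have := Real.cos_le_one (n * δ)
  have : 0 ≤ 1 - Real.cos (n*δ) := by linarith
  have hpi := Real.pi_pos
  unfold tc
  split_ifs <;> positivity

lemma tent_sum {δ t : ℝ} (hδ : 0 < δ) (hδ' : δ ≤ π) (ht : |t| ≤ π) :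
    HasSum (fun n : ℤ => (tc δ n : ℂ) * Complex.exp (Complex.I * n * t)) (tent δ t : ℂ) := by
  have hpi := Real.pi_pos
  obtain ⟨ht1, ht2⟩ := abs_le.1 ht
  have h0 := H_sum t (by linarith)
  have h1 := H_sum (t + δ) (abs_le.2 ⟨by linarith, by linarith⟩)
  have h2 := H_sum (t - δ) (abs_le.2 ⟨by linarith, by linarith⟩)
  have h3 := (((h0.mul_left 2).sub h1).sub h2).mul_left (1 / (2*π*δ) : ℂ)
  have h4 : HasSum (fun n : ℤ => if n = 0 then ((δ / (2*π) : ℝ) : ℂ) else 0) ((δ / (2*π) : ℝ) : ℂ) :=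
    hasSum_ite_eq 0 _
  have h5 := h3.add h4
  have hpc : (π : ℂ) ≠ 0 := by exact_mod_cast hpi.ne'
  have hdc : (δ : ℂ) ≠ 0 := by exact_mod_cast hδ.ne'
  convert! h5 using 1
  · funext n
    by_cases hn : n = 0
    · subst hn; simp [tc]
    · have hnc : (n : ℂ) ≠ 0 := by exact_mod_cast hn
      simp only [tc, hn, if_false, add_zero]
      push_cast
      have ea : Complex.exp (Complex.I * n * (t + δ)) = Complex.exp (Complex.I * n * t) * Complex.exp ((n * δ) * Complex.I) := by
        rw [← Complex.exp_add]; ring_nf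
      have eb : Complex.exp (Complex.I * n * (t - δ)) = Complex.exp (Complex.I * n * t) * Complex.exp (-(n * δ) * Complex.I) := by
        rw [← Complex.exp_add]; ring_nf
      rw [ea, eb, Complex.cos]
      field_simp
      ring
  · rw [show (1 / (2*π*δ) : ℂ) = ((1 / (2*π*δ) : ℝ) : ℂ) by push_cast; rfl]
    norm_cast
    have key : |t+δ| + |t-δ| = 2 * |t| + 2 * max 0 (δ - |t|) := by
      rcases le_total 0 t with h | h <;> rcases le_total δ |t| with h' | h'
      · rw [abs_of_nonneg h] at *; rw [max_eq_left (by linarith), abs_of_nonneg (by linarith : 0 ≤ t+δ), abs_of_nonneg (by linarith : 0 ≤ t-δ)]; ring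
      · rw [abs_of_nonneg h] at *; rw [max_eq_right (by linarith), abs_of_nonneg (by linarith : 0 ≤ t+δ), abs_of_nonpos (by linarith : t-δ ≤ 0)]; ring
      · rw [abs_of_nonpos h] at *; rw [max_eq_left (by linarith), abs_of_nonpos (by linarith : t+δ ≤ 0), abs_of_nonpos (by linarith : t-δ ≤ 0)]; ring
      · rw [abs_of_nonpos h] at *; rw [max_eq_right (by linarith), abs_of_nonneg (by linarith : 0 ≤ t+δ), abs_of_nonpos (by linarith : t-δ ≤ 0)]; ring
    have ht : tent δ t = (max 0 (δ - |t|)) / δ := by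
      unfold tent
      rcases le_total δ |t| with h' | h'
      · rw [max_eq_left, max_eq_left (by linarith)]; · simp
        rw [sub_nonpos, le_div_iff₀ hδ]; linarith
      · rw [max_eq_right, max_eq_right (by linarith)]; · field_simp
        rw [sub_nonneg, div_le_iff₀ hδ]; linarith
    rw [ht]
    have : max 0 (δ - |t|) = (|t+δ| + |t-δ|)/2 - |t| := by linarith
    rw [this]
    field_simp
    ring

lemma tc_sum {δ : ℝ} (hδ : 0 < δ) (hδ' : δ ≤ π) : HasSum (tc δ) 1 := by
  have h := tent_sum (t := 0) hδ hδ' (by simpa using Real.pi_pos.le)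
  simp [tent] at h
  exact Complex.hasSum_ofReal.1 (by simpa using h)

lemma tent_continuous (δ : ℝ) : Continuous (tent δ) := by
  unfold tent; fun_prop

lemma tent_nonneg (δ t : ℝ) : 0 ≤ tent δ t := le_max_left _ _

lemma coef_shift {f : ℝ → ℂ} (hper : ∀ t, f (t + 2*π) = f t) (k : ℤ) (a : ℝ) :
    ∫ t in (a - π)..(a + π), f t * Complex.exp (-Complex.I * (k:ℂ) * (t:ℂ))
      = (2 * π : ℂ) * fourierCoef f k := by
  have hp : Function.Periodic (fun t : ℝ => f t * Complex.exp (-Complex.I * (k:ℂ) * (t:ℂ))) (2*π) := by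
    intro t
    simp only [hper]
    congr 1
    rw [Complex.exp_eq_exp_iff_exists_int]
    refine ⟨-k, ?_⟩
    push_cast; ring
  have h := hp.intervalIntegral_add_eq (a - π) 0
  rw [show a - π + 2*π = a + π by ring, zero_add] at h
  rw [h, fourierCoef]
  have : (π : ℂ) ≠ 0 := by exact_mod_cast Real.pi_ne_zero
  field_simp

lemma loc_sum {f : ℝ → ℂ} (hf : Continuous f) (hper : ∀ t, f (t + 2*π) = f t)
    (hb : ∀ t, ‖f t‖ ≤ 1) {δ : ℝ} (hδ : 0 < δ) (hδ' : δ ≤ π) (a : ℝ) (n : ℤ) :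
    HasSum (fun j : ℤ => (tc δ j : ℂ) * Complex.exp (-Complex.I * j * a) *
        ((2 * π : ℂ) * fourierCoef f (n - j)))
      (∫ t in (a - π)..(a + π), f t * Complex.exp (-Complex.I * (n:ℂ) * (t:ℂ)) * (tent δ (t - a) : ℂ)) := by
  have hpi := Real.pi_pos
  have key := intervalIntegral.hasSum_integral_of_dominated_convergence (μ := volume)
    (a := a - π) (b := a + π)
    (F := fun (j : ℤ) (t : ℝ) => f t * Complex.exp (-Complex.I * (n:ℂ) * (t:ℂ)) *
      ((tc δ j : ℂ) * Complex.exp (Complex.I * j * ((t - a : ℝ) : ℂ))))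
    (f := fun t => f t * Complex.exp (-Complex.I * (n:ℂ) * (t:ℂ)) * (tent δ (t - a) : ℂ))
    (fun j _ => tc δ j) ?_ ?_ ?_ ?_ ?_
  · convert! key using 1
    funext j
    rw [← coef_shift hper (n - j) a, ← intervalIntegral.integral_const_mul]
    congr 1
    funext t
    have : Complex.exp (-Complex.I * (n:ℂ) * (t:ℂ)) * Complex.exp (Complex.I * j * ((t - a : ℝ) : ℂ))
      = Complex.exp (-Complex.I * j * a) * Complex.exp (-Complex.I * ((n - j : ℤ):ℂ) * (t:ℂ)) := by
      rw [← Complex.exp_add, ← Complex.exp_add]; congr 1; push_cast; ring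
    linear_combination (-(tc δ j : ℂ) * f t) * this
  · intro j
    apply Continuous.aestronglyMeasurable
    fun_prop
  · intro j
    refine Filter.Eventually.of_forall fun t _ => ?_
    have e1 : ‖Complex.exp (-Complex.I * (n:ℂ) * (t:ℂ))‖ = 1 := by
      rw [Complex.norm_exp]; simp
    have e2 : ‖Complex.exp (Complex.I * j * ((t - a : ℝ) : ℂ))‖ = 1 := by
      rw [Complex.norm_exp]; simp
    rw [norm_mul, norm_mul, norm_mul, e1, e2, Complex.norm_real, Real.norm_eq_abs,
      abs_of_nonneg (tc_nonneg hδ j)]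
    have := hb t
    have := tc_nonneg hδ j
    nlinarith
  · exact Filter.Eventually.of_forall fun t _ => (tc_sum hδ hδ').summable
  · exact intervalIntegrable_const
  · refine Filter.Eventually.of_forall fun t ht => ?_
    rw [uIoc_of_le (by linarith)] at ht
    exact (tent_sum hδ hδ' (abs_le.2 ⟨by linarith [ht.1], by linarith [ht.2]⟩)).mul_left _

lemma loc_lower {ψ : ℝ → ℝ} (hψ : Continuous ψ) {δ a : ℝ} (hδ : 0 < δ) (hδ' : δ ≤ π)
    (hc : ∀ t, |t - a| ≤ δ → |ψ t - ψ a| ≤ 1) :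
    δ / 4 ≤ ‖∫ t in (a - π)..(a + π), Complex.exp (Complex.I * ψ t) * (tent δ (t - a) : ℂ)‖ := by
  have hpi := Real.pi_pos
  have htc := tent_continuous δ
  have e0 : ‖∫ t in (a - π)..(a + π), Complex.exp (Complex.I * ψ t) * (tent δ (t - a) : ℂ)‖
     = ‖∫ t in (a - π)..(a + π), Complex.exp (-Complex.I * ψ a) * (Complex.exp (Complex.I * ψ t) * (tent δ (t - a) : ℂ))‖ := by
    rw [intervalIntegral.integral_const_mul, norm_mul]
    have : ‖Complex.exp (-Complex.I * ψ a)‖ = 1 := by rw [Complex.norm_exp]; simp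
    rw [this, one_mul]
  rw [e0]
  refine le_trans ?_ (Complex.re_le_norm _)
  have hcont : Continuous (fun t : ℝ => Complex.exp (-Complex.I * ψ a) * (Complex.exp (Complex.I * ψ t) * (tent δ (t - a) : ℂ))) := by
    fun_prop
  have e1 : (∫ t in (a - π)..(a + π), Complex.exp (-Complex.I * ψ a) * (Complex.exp (Complex.I * ψ t) * (tent δ (t - a) : ℂ))).re
     = ∫ t in (a - π)..(a + π), Real.cos (ψ t - ψ a) * tent δ (t - a) := by
    have := Complex.reCLM.intervalIntegral_comp_comm (hcont.intervalIntegrable (μ := volume) (a - π) (a + π))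
    simp only [Complex.reCLM_apply] at this
    rw [← this]
    congr 1
    funext t
    have : Complex.exp (-Complex.I * ψ a) * (Complex.exp (Complex.I * ψ t) * (tent δ (t - a) : ℂ))
      = Complex.exp (((ψ t - ψ a : ℝ) : ℂ) * Complex.I) * (tent δ (t - a) : ℂ) := by
      rw [← mul_assoc, ← Complex.exp_add]; congr 2; push_cast; ring
    rw [this, Complex.re_mul_ofReal, Complex.exp_ofReal_mul_I_re]
  rw [e1]
  have hcont2 : Continuous (fun t => Real.cos (ψ t - ψ a) * tent δ (t - a)) := by fun_prop
  have hcos : ∀ t, |t - a| ≤ δ → 1/2 ≤ Real.cos (ψ t - ψ a) := by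
    intro t ht
    have h1 := Real.one_sub_sq_div_two_le_cos (x := ψ t - ψ a)
    have h2 := hc t ht
    have h3 : (ψ t - ψ a)^2 ≤ 1 := by rw [← sq_abs]; nlinarith [abs_nonneg (ψ t - ψ a)]
    linarith
  calc δ / 4 = ∫ t in (a - δ/2)..(a + δ/2), (1/4 : ℝ) := by
        rw [intervalIntegral.integral_const, smul_eq_mul]; ring
    _ ≤ ∫ t in (a - δ/2)..(a + δ/2), Real.cos (ψ t - ψ a) * tent δ (t - a) := by
        apply intervalIntegral.integral_mono_on (by linarith) intervalIntegrable_const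
          (hcont2.intervalIntegrable _ _)
        intro t ht
        have h1 : |t - a| ≤ δ / 2 := abs_le.2 ⟨by linarith [ht.1], by linarith [ht.2]⟩
        have h2 := hcos t (by linarith)
        have h3 : 1/2 ≤ tent δ (t - a) := by
          unfold tent
          apply le_max_of_le_right
          have : |t - a| / δ ≤ 1/2 := by rw [div_le_iff₀ hδ]; linarith
          linarith
        nlinarith
    _ ≤ _ := by
        apply intervalIntegral.integral_mono_interval (by linarith) (by linarith) (by linarith)
        · refine Filter.Eventually.of_forall fun t => ?_
          show 0 ≤ Real.cos (ψ t - ψ a) * tent δ (t - a)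
          rcases le_total |t - a| δ with h | h
          · exact mul_nonneg (by linarith [hcos t h]) (tent_nonneg _ _)
          · have : tent δ (t - a) = 0 := by
              unfold tent
              apply max_eq_left
              have : 1 ≤ |t - a| / δ := by rw [le_div_iff₀ hδ]; linarith
              linarith
            rw [this, mul_zero]
        · exact hcont2.intervalIntegrable _ _

lemma jensen {p : ℝ} (hp : 1 ≤ p) (w x : ℤ → ℝ≥0∞) (hw : ∑' j, w j ≤ 1) :
    (∑' j, w j * x j) ^ p ≤ ∑' j, w j * x j ^ p := by
  have hp0 : 0 < p := by linarith
  have h : ∑' j, w j * x j ≤ (∑' j, w j * x j ^ p) ^ p⁻¹ := by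
    rw [ENNReal.tsum_eq_iSup_sum]
    refine iSup_le fun s => ?_
    refine (ENNReal.inner_le_weight_mul_Lp_of_nonneg s hp w x).trans ?_
    have h1 : (∑ i ∈ s, w i) ^ (1 - p⁻¹) ≤ 1 :=
      ENNReal.rpow_le_one ((ENNReal.sum_le_tsum s).trans hw)
        (sub_nonneg.2 (inv_le_one_of_one_le₀ hp))
    calc _ ≤ 1 * (∑ i ∈ s, w i * x i ^ p) ^ p⁻¹ := by gcongr
      _ ≤ _ := by
        rw [one_mul]
        exact ENNReal.rpow_le_rpow (ENNReal.sum_le_tsum s) (by positivity)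
  calc _ ≤ ((∑' j, w j * x j ^ p) ^ p⁻¹) ^ p := ENNReal.rpow_le_rpow h hp0.le
    _ = _ := ENNReal.rpow_inv_rpow hp0.ne' _

lemma young {p : ℝ} (hp : 1 ≤ p) (w x : ℤ → ℝ≥0∞) (hw : ∑' j, w j ≤ 1) :
    ∑' n : ℤ, (∑' j, w j * x (n - j)) ^ p ≤ ∑' n, x n ^ p := by
  calc _ ≤ ∑' n : ℤ, ∑' j, w j * x (n - j) ^ p :=
        ENNReal.tsum_le_tsum fun n => jensen hp w (fun j => x (n - j)) hw
    _ = ∑' j, ∑' n : ℤ, w j * x (n - j) ^ p := ENNReal.tsum_comm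
    _ = ∑' j, w j * ∑' n : ℤ, x n ^ p := by
        congr 1; funext j
        rw [ENNReal.tsum_mul_left]
        congr 1
        exact (Equiv.subRight j).tsum_eq (fun n => x n ^ p)
    _ ≤ _ := by
        rw [ENNReal.tsum_mul_right]
        calc _ ≤ 1 * ∑' n : ℤ, x n ^ p := by gcongr
          _ = _ := one_mul _

/-- Each integer frequency equal to a slope of the phase carries a large local coefficient. -/
lemma freq_lower {f : ℝ → ℂ} (hf : Continuous f) (hper : ∀ t, f (t + 2*π) = f t)
    (hb : ∀ t, ‖f t‖ ≤ 1) {ψ : ℝ → ℝ} (hψ : Continuous ψ) {δ a : ℝ} (hδ : 0 < δ) (hδ' : δ ≤ π)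
    (n : ℤ) (hfψ : ∀ t : ℝ, f t * Complex.exp (-Complex.I * (n:ℂ) * (t:ℂ)) = Complex.exp (Complex.I * ψ t))
    (hc : ∀ t, |t - a| ≤ δ → |ψ t - ψ a| ≤ 1) :
    ENNReal.ofReal (δ / (8 * π)) ≤ ∑' j : ℤ, ENNReal.ofReal (tc δ j) * (‖fourierCoef f (n - j)‖₊ : ℝ≥0∞) := by
  have hpi := Real.pi_pos
  have h1 := loc_lower hψ hδ hδ' hc
  have h2 := loc_sum hf hper hb hδ hδ' a n
  simp only [hfψ] at h2
  have hterm : ∀ j : ℤ, ‖(tc δ j : ℂ) * Complex.exp (-Complex.I * j * a) *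
        ((2 * π : ℂ) * fourierCoef f (n - j))‖ₑ = ENNReal.ofReal (2*π) * (ENNReal.ofReal (tc δ j) * (‖fourierCoef f (n - j)‖₊ : ℝ≥0∞)) := by
    intro j
    have e : ‖Complex.exp (-Complex.I * j * a)‖ₑ = 1 := by
      rw [← ofReal_norm, Complex.norm_exp]; simp
    have e2 : ‖(tc δ j : ℂ)‖ₑ = ENNReal.ofReal (tc δ j) := by
      rw [← ofReal_norm, Complex.norm_real, Real.norm_eq_abs, abs_of_nonneg (tc_nonneg hδ j)]
    have e3 : ‖(2 * π : ℂ)‖ₑ = ENNReal.ofReal (2*π) := by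
      rw [← ofReal_norm, show (2 * π : ℂ) = ((2*π : ℝ) : ℂ) by push_cast; rfl, Complex.norm_real,
        Real.norm_eq_abs, abs_of_nonneg (by positivity)]
    rw [enorm_mul, enorm_mul, enorm_mul, e, e2, e3, mul_one, enorm_eq_nnnorm]
    ring
  have h3 : ENNReal.ofReal (δ / 4) ≤ ENNReal.ofReal (2*π) *
      ∑' j : ℤ, ENNReal.ofReal (tc δ j) * (‖fourierCoef f (n - j)‖₊ : ℝ≥0∞) := by
    rw [← ENNReal.tsum_mul_left]
    simp_rw [← hterm]
    refine (ENNReal.ofReal_le_ofReal h1).trans ?_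
    rw [ofReal_norm, ← h2.tsum_eq]
    exact enorm_tsum_le_tsum_enorm
  have h4 : ENNReal.ofReal (δ / 4) = ENNReal.ofReal (2*π) * ENNReal.ofReal (δ / (8*π)) := by
    rw [← ENNReal.ofReal_mul (by positivity)]; congr 1; field_simp; ring
  rw [h4] at h3
  exact (ENNReal.mul_le_mul_iff_right (by simp [hpi]) ENNReal.ofReal_ne_top).1 h3

lemma main_pos (p : ℝ) (hp1 : 1 ≤ p)
    (ω : ℝ → ℝ) (hω_mono : MonotoneOn ω (Ici 0))
    (hω_zero : ω 0 = 0)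
    (hχ_mono : StrictMonoOn (fun δ => δ * ω δ) (Ici 0))
    (χinv : ℝ → ℝ)
    (hχinv_right : ∀ y : ℝ, 0 ≤ y → 0 ≤ χinv y ∧ χinv y * ω (χinv y) = y)
    (φ : ℝ → ℝ)
    (hφ_per : ∀ t : ℝ, φ (t + 2 * Real.pi) = φ t)
    (hφ_C1 : ContDiff ℝ 1 φ)
    (hφ_lip : ∃ C : ℝ, 0 < C ∧ ∀ s t : ℝ, |deriv φ s - deriv φ t| ≤ C * ω |s - t|)
    (hφ_nonconst : ∃ s t : ℝ, φ s ≠ φ t) :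
    ∃ c : ℝ, 0 < c ∧ ∀ lam : ℝ, 1 ≤ lam →
      ENNReal.ofReal (c * lam ^ (1 / p) * χinv (1 / lam)) ≤
        ApNorm p (fun t => Complex.exp (Complex.I * (lam : ℂ) * (φ t : ℂ))) := by
  have hpi := Real.pi_pos
  have hp0 : 0 < p := by linarith
  obtain ⟨C, hC, hlip⟩ := hφ_lip
  have hdiff : Differentiable ℝ φ := hφ_C1.differentiable (by norm_num)
  have hdc : Continuous (deriv φ) := hφ_C1.continuous_deriv le_rfl
  -- a zero of the derivative
  obtain ⟨x0, -, hx0⟩ : ∃ x ∈ Ioo (0:ℝ) (2*π), deriv φ x = 0 :=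
    exists_deriv_eq_zero (by positivity) hdiff.continuous.continuousOn (by simpa using (hφ_per 0).symm)
  -- a point of positive derivative
  obtain ⟨x1, hx1⟩ : ∃ x, 0 < deriv φ x := by
    by_contra! hcon
    have hanti : Antitone φ := antitone_of_deriv_nonpos hdiff hcon
    have hper : Function.Periodic φ (2*π) := hφ_per
    have hle : ∀ s t, φ s ≤ φ t := by
      intro s t
      obtain ⟨m, hm⟩ := exists_nat_gt ((t - s) / (2*π))
      rw [div_lt_iff₀ (by positivity)] at hm
      rw [← hper.nat_mul m s]
      exact hanti (by linarith)
    obtain ⟨s, t, hst⟩ := hφ_nonconst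
    exact hst (le_antisymm (hle s t) (hle t s))
  set M := deriv φ x1 with hM
  set D := χinv 1 with hD
  have hD0 : 0 ≤ D := (hχinv_right 1 zero_le_one).1
  set κ := min 1 (min (1 / C) (π / (D + 1))) with hκ
  have hκ0 : 0 < κ := by rw [hκ]; positivity
  have hκ1 : κ ≤ 1 := min_le_left _ _
  have hκC : κ * C ≤ 1 := by
    have : κ ≤ 1 / C := (min_le_right _ _).trans (min_le_left _ _)
    rwa [le_div_iff₀ hC] at this
  have hκD : κ * (D + 1) ≤ π := by
    have : κ ≤ π / (D+1) := (min_le_right _ _).trans (min_le_right _ _)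
    rwa [le_div_iff₀ (by positivity)] at this
  refine ⟨M ^ (1/p) * (κ / (8 * π)), by positivity, fun lam hlam => ?_⟩
  have hl0 : 0 < lam := by linarith
  obtain ⟨hd0, hd1⟩ := hχinv_right (1 / lam) (by positivity)
  set d := χinv (1 / lam) with hd
  have hdpos : 0 < d := by
    rcases hd0.eq_or_lt with h | h
    · rw [← h, zero_mul] at hd1
      have : 0 < 1 / lam := by positivity
      linarith
    · exact h
  have hdD : d ≤ D := by
    have h2 := (hχinv_right 1 zero_le_one).2
    refine (hχ_mono.le_iff_le (a := d) (b := D) hd0 hD0).1 ?_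
    show d * ω d ≤ D * ω D
    rw [hd1, h2, div_le_one hl0]; exact hlam
  set δ := κ * d with hδ
  have hδ0 : 0 < δ := by positivity
  have hδpi : δ ≤ π := by nlinarith
  have hδd : δ ≤ d := by nlinarith
  set f : ℝ → ℂ := fun t => Complex.exp (Complex.I * (lam : ℂ) * (φ t : ℂ)) with hfdef
  have hfc : Continuous f := by
    have := hdiff.continuous
    fun_prop
  have hfper : ∀ t, f (t + 2*π) = f t := fun t => by simp only [hfdef, hφ_per]
  have hfb : ∀ t, ‖f t‖ ≤ 1 := fun t => by
    simp only [hfdef]; rw [Complex.norm_exp]; simp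
  set x : ℤ → ℝ≥0∞ := fun k => (‖fourierCoef f k‖₊ : ℝ≥0∞) with hx
  set w : ℤ → ℝ≥0∞ := fun j => ENNReal.ofReal (tc δ j) with hw
  have hw1 : ∑' j, w j ≤ 1 := by
    rw [hw, ← ENNReal.ofReal_tsum_of_nonneg (tc_nonneg hδ0) (tc_sum hδ0 hδpi).summable,
      (tc_sum hδ0 hδpi).tsum_eq, ENNReal.ofReal_one]
  -- lower bound at each frequency
  have hfreq : ∀ m : ℕ, (m : ℝ) ≤ M * lam →
      ENNReal.ofReal (δ / (8*π)) ≤ ∑' j, w j * x ((m:ℤ) - j) := by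
    intro m hm
    have hmem : (m : ℝ) / lam ∈ Set.range (deriv φ) := by
      apply mem_range_of_exists_le_of_exists_ge hdc
      · exact ⟨x0, by rw [hx0]; positivity⟩
      · exact ⟨x1, by rw [div_le_iff₀ hl0]; exact hm⟩
    obtain ⟨a, ha⟩ := hmem
    refine freq_lower hfc hfper hfb (ψ := fun t => lam * φ t - m * t) (a := a) ?_ hδ0 hδpi (m:ℤ) ?_ ?_
    · have := hdiff.continuous
      fun_prop
    · intro t
      simp only [hfdef]
      rw [← Complex.exp_add]; congr 1; push_cast; ring
    · intro t ht
      have hderiv : ∀ y, HasDerivAt (fun t => lam * φ t - m * t) (lam * deriv φ y - m) y := by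
        intro y
        have h1 := (hdiff y).hasDerivAt.const_mul lam
        have h2 := (hasDerivAt_id y).const_mul (m:ℝ)
        have h3 := h1.fun_sub h2
        simp only [id, mul_one] at h3
        exact h3
      have hconv := (convex_Icc (a - δ) (a + δ)).norm_image_sub_le_of_norm_hasDerivWithin_le
        (f := fun t => lam * φ t - m * t) (f' := fun y => lam * deriv φ y - m)
        (C := lam * (C * ω d)) (x := a) (y := t)
        (fun y _ => (hderiv y).hasDerivWithinAt) ?_ ⟨by linarith, by linarith⟩
        ⟨by linarith [(abs_le.1 ht).1], by linarith [(abs_le.1 ht).2]⟩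
      · rw [Real.norm_eq_abs, Real.norm_eq_abs] at hconv
        refine hconv.trans ?_
        have hωd : 0 ≤ ω d := by
          rw [← hω_zero]; exact hω_mono (by simp) hd0 hd0
        calc lam * (C * ω d) * |t - a| ≤ lam * (C * ω d) * δ := by gcongr
          _ = (κ * C) * (lam * (d * ω d)) := by rw [hδ]; ring
          _ = κ * C := by rw [hd1]; field_simp
          _ ≤ 1 := hκC
      · intro y hy
        have hya : |y - a| ≤ d := (abs_le.2 ⟨by linarith [hy.1], by linarith [hy.2]⟩ : |y - a| ≤ δ).trans hδd
        have e : lam * deriv φ y - m = lam * (deriv φ y - deriv φ a) := by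
          rw [ha]; field_simp
        rw [e, Real.norm_eq_abs, abs_mul, abs_of_pos hl0]
        have := hω_mono (abs_nonneg (y - a)) hd0 hya
        have h3 := hlip y a
        gcongr
        exact h3.trans (by gcongr)
  -- sum over frequencies
  set N := ⌊M * lam⌋₊ with hN
  have hNle : M * lam ≤ ((N + 1 : ℕ) : ℝ) := by
    push_cast; exact (Nat.lt_floor_add_one _).le
  have hsum : ENNReal.ofReal (M * lam) * ENNReal.ofReal (δ / (8*π)) ^ p ≤ ∑' n, x n ^ p := by
    calc ENNReal.ofReal (M * lam) * ENNReal.ofReal (δ / (8*π)) ^ p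
        ≤ ((N + 1 : ℕ) : ℝ≥0∞) * ENNReal.ofReal (δ / (8*π)) ^ p := by
          gcongr
          rw [← ENNReal.ofReal_natCast]
          exact ENNReal.ofReal_le_ofReal hNle
      _ = ∑ m ∈ Finset.range (N+1), ENNReal.ofReal (δ / (8*π)) ^ p := by
          simp [Finset.sum_const]
      _ ≤ ∑ m ∈ Finset.range (N+1), (∑' j, w j * x ((m:ℤ) - j)) ^ p := by
          apply Finset.sum_le_sum
          intro m hm
          apply ENNReal.rpow_le_rpow _ hp0.le
          apply hfreq
          have : m ≤ N := by rw [Finset.mem_range] at hm; omega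
          exact (Nat.cast_le.2 this).trans (Nat.floor_le (by positivity))
      _ ≤ ∑' m : ℕ, (∑' j, w j * x ((m:ℤ) - j)) ^ p := ENNReal.sum_le_tsum _
      _ ≤ ∑' n : ℤ, (∑' j, w j * x (n - j)) ^ p :=
          ENNReal.tsum_comp_le_tsum_of_injective Nat.cast_injective (fun n : ℤ => (∑' j, w j * x (n - j)) ^ p)
      _ ≤ _ := young hp1 w x hw1
  have hfin := ENNReal.rpow_le_rpow hsum (by positivity : 0 ≤ 1 / p)
  refine le_trans (le_of_eq ?_) hfin
  rw [ENNReal.mul_rpow_of_nonneg _ _ (by positivity), ← ENNReal.rpow_mul, mul_one_div_cancel hp0.ne',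
    ENNReal.rpow_one, ENNReal.ofReal_rpow_of_pos (by positivity), ← ENNReal.ofReal_mul (by positivity),
    Real.mul_rpow hx1.le hl0.le]
  congr 1
  rw [hδ]; ring

/-- Theorem 1: lower bound for ‖e^{iλφ}‖_{A_p} for a non-constant
real φ ∈ C^{1,ω}(𝕋), 1 ≤ p < 2. -/
theorem statement0
    (p : ℝ) (hp1 : 1 ≤ p) (hp2 : p < 2)
    -- ω is a modulus of continuity: continuous non-decreasing on [0,∞), ω(0)=0, ω(δ)>0 for δ>0,
    -- with χ(δ) = δ·ω(δ) strictly increasing and unbounded, and χinv its inverse.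
    (ω : ℝ → ℝ)
    (hω_cont : ContinuousOn ω (Ici 0)) (hω_mono : MonotoneOn ω (Ici 0))
    (hω_zero : ω 0 = 0) (hω_pos : ∀ δ : ℝ, 0 < δ → 0 < ω δ)
    (hχ_mono : StrictMonoOn (fun δ => δ * ω δ) (Ici 0))
    (hχ_unbdd : ∀ y : ℝ, ∃ δ : ℝ, 0 ≤ δ ∧ y < δ * ω δ)
    (χinv : ℝ → ℝ)
    (hχinv_left : ∀ δ : ℝ, 0 ≤ δ → χinv (δ * ω δ) = δ)
    (hχinv_right : ∀ y : ℝ, 0 ≤ y → 0 ≤ χinv y ∧ χinv y * ω (χinv y) = y)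
    (φ : ℝ → ℝ)
    (hφ_per : ∀ t : ℝ, φ (t + 2 * Real.pi) = φ t)
    (hφ_C1 : ContDiff ℝ 1 φ)
    (hφ_lip : ∃ C : ℝ, 0 < C ∧ ∀ s t : ℝ, |deriv φ s - deriv φ t| ≤ C * ω |s - t|)
    (hφ_nonconst : ∃ s t : ℝ, φ s ≠ φ t) :
    ∃ c : ℝ, 0 < c ∧ ∀ lam : ℝ, 1 ≤ |lam| →
      ENNReal.ofReal (c * |lam| ^ (1 / p) * χinv (1 / |lam|)) ≤
        ApNorm p (fun t => Complex.exp (Complex.I * (lam : ℂ) * (φ t : ℂ))) := by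
  obtain ⟨c1, hc1, h1⟩ := main_pos p hp1 ω hω_mono hω_zero hχ_mono χinv hχinv_right φ hφ_per hφ_C1
    hφ_lip hφ_nonconst
  obtain ⟨c2, hc2, h2⟩ := main_pos p hp1 ω hω_mono hω_zero hχ_mono χinv hχinv_right (fun t => -φ t)
    (fun t => by simp only [hφ_per]) hφ_C1.neg
    (by
      obtain ⟨C, hC, h⟩ := hφ_lip
      refine ⟨C, hC, fun s t => ?_⟩
      have e : ∀ y, deriv (fun t => -φ t) y = -deriv φ y := fun y => deriv.fun_neg
      rw [e, e, show -deriv φ s - -deriv φ t = -(deriv φ s - deriv φ t) by ring, abs_neg]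
      exact h s t)
    (by
      obtain ⟨s, t, h⟩ := hφ_nonconst
      exact ⟨s, t, fun h' => h (neg_injective h')⟩)
  refine ⟨min c1 c2, lt_min hc1 hc2, fun lam hlam => ?_⟩
  have hχ : 0 ≤ χinv (1 / |lam|) := (hχinv_right _ (by positivity)).1
  rcases le_total 0 lam with h | h
  · rw [abs_of_nonneg h] at *
    refine le_trans (ENNReal.ofReal_le_ofReal ?_) (h1 lam hlam)
    gcongr
    exact min_le_left _ _
  · rw [abs_of_nonpos h] at *
    have h3 := h2 (-lam) hlam
    have e : (fun t => Complex.exp (Complex.I * ((-lam : ℝ) : ℂ) * ((-φ t : ℝ) : ℂ)))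
        = (fun t => Complex.exp (Complex.I * (lam : ℂ) * (φ t : ℂ))) := by
      funext t; congr 1; push_cast; ring
    rw [e] at h3
    refine le_trans (ENNReal.ofReal_le_ofReal ?_) h3
    gcongr
    exact min_le_right _ _
end

section
/- Let 1 ≤ p < 2. Let I ⊂ ℝ be an interval of length |I| < 2π, and let φ be a real-valued function on I that is nonlinear on I (not of the form at+b on all of I) and belongs to C^{1,ω}(I). Then there exists c > 0 such that for all real λ with |λ| ≥ 1, ‖e^{iλφ}‖_{A_p(𝕋,I)} ≥ c · |λ|^{1/p} · χ^{-1}(1/|λ|); equivalently, every function F ∈ A_p(𝕋) whose restriction to I equals e^{iλφ} satisfies ‖F‖_{A_p(𝕋)} ≥ c · |λ|^{1/p} · χ^{-1}(1/|λ|). -/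
open MeasureTheory Real Set
open scoped ENNReal

noncomputable def tri (w t : ℝ) : ℝ := max 0 (1 - |t| / w)

noncomputable def triCoef (w : ℝ) (m : ℤ) : ℝ :=
  if m = 0 then w / (2 * π) else (1 - Real.cos (m * w)) / (π * w * (m:ℝ) ^ 2)

lemma tri_continuous (w : ℝ) : Continuous (tri w) := by
  unfold tri; fun_prop

lemma tri_nonneg (w t : ℝ) : 0 ≤ tri w t := le_max_left _ _

lemma tri_zero_of_le {w t : ℝ} (hw : 0 < w) (h : w ≤ |t|) : tri w t = 0 := by
  unfold tri
  apply max_eq_left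
  have : 1 ≤ |t| / w := by rwa [le_div_iff₀ hw, one_mul]
  linarith

lemma tri_right {w t : ℝ} (hw : 0 < w) (h0 : 0 ≤ t) (h : t ≤ w) : tri w t = 1 - t / w := by
  unfold tri
  rw [abs_of_nonneg h0]
  apply max_eq_right
  have : t / w ≤ 1 := by rwa [div_le_iff₀ hw, one_mul]
  linarith

lemma tri_left {w t : ℝ} (hw : 0 < w) (h0 : t ≤ 0) (h : -w ≤ t) : tri w t = 1 + t / w := by
  unfold tri
  rw [abs_of_nonpos h0]
  have : -t / w ≤ 1 := by rw [div_le_iff₀ hw, one_mul]; linarith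
  rw [max_eq_right (by linarith)]
  ring

/-- reduction of an integral against the triangle to two pieces -/
lemma tri_integral_split {w : ℝ} (hw : 0 < w) (hwp : w < π) (h : ℝ → ℂ) (hh : Continuous h) :
    ∫ t in (-π)..π, h t * (tri w t : ℂ) =
      (∫ t in (-w)..0, h t * (1 + (t:ℂ) / w)) + ∫ t in (0:ℝ)..w, h t * (1 - (t:ℂ) / w) := by
  have hc : Continuous fun t => h t * (tri w t : ℂ) := by
    have := tri_continuous w
    fun_prop
  have hi : ∀ a b, IntervalIntegrable (fun t => h t * (tri w t : ℂ)) volume a b :=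
    fun a b => hc.intervalIntegrable a b
  rw [← intervalIntegral.integral_add_adjacent_intervals (hi (-π) (-w)) (hi (-w) π),
    ← intervalIntegral.integral_add_adjacent_intervals (hi (-w) 0) (hi 0 π),
    ← intervalIntegral.integral_add_adjacent_intervals (hi 0 w) (hi w π)]
  have e1 : ∫ t in (-π)..(-w), h t * (tri w t : ℂ) = 0 := by
    rw [← intervalIntegral.integral_zero (a := -π) (b := -w) (μ := volume)]
    apply intervalIntegral.integral_congr
    intro t ht
    rw [uIcc_of_le (by linarith)] at ht
    have : tri w t = 0 := tri_zero_of_le hw (by rw [abs_of_nonpos (by linarith [ht.2])]; linarith [ht.2])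
    simp [this]
  have e2 : ∫ t in w..π, h t * (tri w t : ℂ) = 0 := by
    rw [← intervalIntegral.integral_zero (a := w) (b := π) (μ := volume)]
    apply intervalIntegral.integral_congr
    intro t ht
    rw [uIcc_of_le (by linarith)] at ht
    have : tri w t = 0 := tri_zero_of_le hw (by rw [abs_of_nonneg (by linarith [ht.1])]; linarith [ht.1])
    simp [this]
  have e3 : ∫ t in (-w)..0, h t * (tri w t : ℂ) = ∫ t in (-w)..0, h t * (1 + (t:ℂ) / w) := by
    apply intervalIntegral.integral_congr
    intro t ht
    rw [uIcc_of_le (by linarith)] at ht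
    simp only [tri_left hw ht.2 ht.1]
    push_cast; rfl
  have e4 : ∫ t in (0:ℝ)..w, h t * (tri w t : ℂ) = ∫ t in (0:ℝ)..w, h t * (1 - (t:ℂ) / w) := by
    apply intervalIntegral.integral_congr
    intro t ht
    rw [uIcc_of_le (by linarith)] at ht
    simp only [tri_right hw ht.1 ht.2]
    push_cast; rfl
  rw [e1, e2, e3, e4]; ring

lemma exp_tri_integral {w : ℝ} (hw : 0 < w) (hwp : w < π) (c : ℂ) (hc : c ≠ 0) :
    ∫ t in (-π)..π, Complex.exp (c * t) * (tri w t : ℂ) =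
      (Complex.exp (c * w) + Complex.exp (-(c * w)) - 2) / (w * c ^ 2) := by
  rw [tri_integral_split hw hwp (fun t => Complex.exp (c * t)) (by fun_prop)]
  have hw' : (w : ℂ) ≠ 0 := by exact_mod_cast hw.ne'
  have hexp : ∀ t : ℝ, HasDerivAt (fun t : ℝ => Complex.exp (c * t)) (Complex.exp (c * t) * c) t := by
    intro t
    have h1 : HasDerivAt (fun t : ℝ => c * (t:ℂ)) (c * 1) t :=
      (Complex.ofRealCLM.hasDerivAt (x := t)).const_mul c
    simpa using h1.cexp
  have hid : ∀ t : ℝ, HasDerivAt (fun t : ℝ => (t:ℂ) / w) (1 / (w:ℂ)) t := by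
    intro t
    exact (Complex.ofRealCLM.hasDerivAt (x := t)).div_const (w:ℂ)
  have d1 : ∀ t : ℝ, HasDerivAt (fun t : ℝ => (1 + (t:ℂ) / w) * Complex.exp (c * t) / c
      - Complex.exp (c * t) / (w * c ^ 2)) (Complex.exp (c * t) * (1 + (t:ℂ) / w)) t := by
    intro t
    refine HasDerivAt.congr_deriv ((((hid t).const_add 1).mul (hexp t)).div_const c |>.sub
      ((hexp t).div_const (w * c ^ 2))) ?_
    field_simp
    ring
  have d2 : ∀ t : ℝ, HasDerivAt (fun t : ℝ => (1 - (t:ℂ) / w) * Complex.exp (c * t) / c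
      + Complex.exp (c * t) / (w * c ^ 2)) (Complex.exp (c * t) * (1 - (t:ℂ) / w)) t := by
    intro t
    refine HasDerivAt.congr_deriv ((((hid t).const_sub 1).mul (hexp t)).div_const c |>.add
      ((hexp t).div_const (w * c ^ 2))) ?_
    field_simp
    ring
  rw [intervalIntegral.integral_eq_sub_of_hasDerivAt (fun t _ => d1 t)
      (Continuous.intervalIntegrable (by fun_prop) _ _),
    intervalIntegral.integral_eq_sub_of_hasDerivAt (fun t _ => d2 t)
      (Continuous.intervalIntegrable (by fun_prop) _ _)]
  push_cast
  simp only [mul_zero, Complex.exp_zero, mul_neg]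
  field_simp
  ring

lemma tri_integral_complex {w : ℝ} (hw : 0 < w) (hwp : w < π) :
    ∫ t in (-π)..π, (tri w t : ℂ) = w := by
  have := tri_integral_split hw hwp (fun t => 1) (by fun_prop)
  simp only [one_mul] at this
  rw [this]
  have hw' : (w : ℂ) ≠ 0 := by exact_mod_cast hw.ne'
  have hsq : ∀ t : ℝ, HasDerivAt (fun t : ℝ => (t:ℂ) ^ 2 / (2 * w)) ((t:ℂ) / (w:ℂ)) t := by
    intro t
    refine HasDerivAt.congr_deriv
      (((Complex.ofRealCLM.hasDerivAt (x := t)).pow 2).div_const (2 * (w:ℂ))) ?_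
    simp; field_simp
  have hid : ∀ t : ℝ, HasDerivAt (fun t : ℝ => (t:ℂ)) 1 t := fun t =>
    Complex.ofRealCLM.hasDerivAt (x := t)
  rw [intervalIntegral.integral_eq_sub_of_hasDerivAt (fun t _ => (hid t).add (hsq t))
      (Continuous.intervalIntegrable (by fun_prop) _ _),
    intervalIntegral.integral_eq_sub_of_hasDerivAt (fun t _ => (hid t).sub (hsq t))
      (Continuous.intervalIntegrable (by fun_prop) _ _)]
  simp
  field_simp
  ring

lemma tri_integral {w : ℝ} (hw : 0 < w) (hwp : w < π) :
    ∫ t in (-π)..π, tri w t = w := by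
  have := tri_integral_complex hw hwp
  rw [intervalIntegral.integral_ofReal] at this
  exact_mod_cast this

lemma triCoef_eq {w : ℝ} (hw : 0 < w) (hwp : w < π) (m : ℤ) :
    ∫ t in (-π)..π, Complex.exp (-Complex.I * m * t) * (tri w t : ℂ) = 2 * π * triCoef w m := by
  have hpi : (π : ℂ) ≠ 0 := by exact_mod_cast Real.pi_ne_zero
  have hw' : (w : ℂ) ≠ 0 := by exact_mod_cast hw.ne'
  unfold triCoef
  split_ifs with h
  · subst h
    simp only [Int.cast_zero, mul_zero, zero_mul, Complex.exp_zero, one_mul]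
    rw [tri_integral_complex hw hwp]
    push_cast
    field_simp
  · have hm : (m : ℂ) ≠ 0 := by exact_mod_cast h
    rw [exp_tri_integral hw hwp _ (by simp [hm])]
    push_cast
    rw [Complex.cos]
    have e1 : -Complex.I * m * w = -(m * w) * Complex.I := by ring
    have e2 : -(-Complex.I * m * w) = (m * w) * Complex.I := by ring
    have e3 : (w * (-Complex.I * m) ^ 2 : ℂ) = - (w * m ^ 2) := by
      rw [mul_pow, neg_sq, Complex.I_sq]; ring
    rw [e2, e1, e3]
    field_simp
    ring

lemma triCoef_nonneg {w : ℝ} (hw : 0 < w) (m : ℤ) : 0 ≤ triCoef w m := by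
  unfold triCoef
  have := Real.pi_pos
  have := Real.cos_le_one (m * w)
  split_ifs
  · positivity
  · apply div_nonneg (by linarith) (by positivity)

lemma triCoef_summable {w : ℝ} (hw : 0 < w) : Summable (triCoef w) := by
  have h1 : Summable fun m : ℤ => (2 / (π * w)) * (1 / (m:ℝ) ^ 2) :=
    (Real.summable_one_div_int_pow.2 one_lt_two).mul_left _
  have h2 : Summable fun m : ℤ => if m = 0 then w / (2 * π) else 0 :=
    summable_of_hasFiniteSupport ((Set.finite_singleton 0).subset (by
      intro m hm; by_contra hne; simp at hne; simp [hne] at hm))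
  refine Summable.of_nonneg_of_le (triCoef_nonneg hw) ?_ (h1.add h2)
  intro m
  have := Real.pi_pos
  unfold triCoef
  split_ifs with h
  · simp [h]
  · have hm : (m:ℝ) ≠ 0 := by exact_mod_cast h
    rw [add_zero, div_mul_div_comm, mul_one]
    have := Real.neg_one_le_cos (m * w)
    gcongr
    linarith

lemma tri_hasSum {w : ℝ} (hw : 0 < w) (hwp : w < π) {t : ℝ} (ht : t ∈ Ioc (-π) π) :
    HasSum (fun m : ℤ => (triCoef w m : ℂ) * Complex.exp (Complex.I * m * t)) (tri w t) := by
  have hpi := Real.pi_pos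
  have : Fact (0 < 2 * π) := ⟨by positivity⟩
  have hab : -π + 2 * π = π := by ring
  have hcont : Continuous (AddCircle.liftIoc (2 * π) (-π) (fun t => (tri w t : ℂ))) := by
    apply AddCircle.liftIoc_continuous
    · rw [hab, tri_zero_of_le hw (by rw [abs_neg, abs_of_pos hpi]; exact hwp.le),
        tri_zero_of_le hw (by rw [abs_of_pos hpi]; exact hwp.le)]
    · have := tri_continuous w
      fun_prop
  let G : C(AddCircle (2 * π), ℂ) := ⟨_, hcont⟩
  have hcoef : ∀ m, fourierCoeff G m = (triCoef w m : ℂ) := by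
    intro m
    change fourierCoeff (AddCircle.liftIoc (2 * π) (-π) (fun t => (tri w t : ℂ))) m = _
    rw [fourierCoeff_liftIoc_eq, fourierCoeffOn_eq_integral, hab]
    have hpi' : (π : ℂ) ≠ 0 := by exact_mod_cast hpi.ne'
    have := triCoef_eq hw hwp m
    have e : ∫ x in (-π)..π, (fourier (-m)) (x : AddCircle (π - -π)) • (tri w x : ℂ) =
        ∫ t in (-π)..π, Complex.exp (-Complex.I * m * t) * (tri w t : ℂ) := by
      apply intervalIntegral.integral_congr
      intro x _
      simp only [fourier_coe_apply, smul_eq_mul]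
      congr 2
      push_cast
      field_simp
      ring
    rw [e, this]
    rw [Complex.real_smul]
    push_cast
    field_simp
    ring
  have hs : Summable (fourierCoeff G) := by
    have : fourierCoeff G = fun m => (triCoef w m : ℂ) := funext hcoef
    rw [this]
    exact_mod_cast (triCoef_summable hw)
  have := has_pointwise_sum_fourier_series_of_summable hs (t : AddCircle (2 * π))
  have hG : G (t : AddCircle (2 * π)) = tri w t := by
    change AddCircle.liftIoc (2 * π) (-π) (fun t => (tri w t : ℂ)) t = _
    rw [AddCircle.liftIoc_coe_apply (by rwa [hab])]
  rw [hG] at this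
  convert this using 2 with m
  rw [hcoef, fourier_coe_apply, smul_eq_mul]
  congr 2
  have hpi' : (π : ℂ) ≠ 0 := by exact_mod_cast hpi.ne'
  push_cast
  field_simp

lemma triCoef_hasSum {w : ℝ} (hw : 0 < w) (hwp : w < π) : HasSum (triCoef w) 1 := by
  have hpi := Real.pi_pos
  have := tri_hasSum hw hwp (t := 0) ⟨by linarith, hpi.le⟩
  have h0 : tri w 0 = 1 := by simp [tri]
  rw [h0] at this
  simp only [Complex.ofReal_zero, mul_zero, Complex.exp_zero, mul_one] at this
  exact_mod_cast this

lemma periodic_char (k : ℤ) :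
    Function.Periodic (fun t : ℝ => Complex.exp (-Complex.I * k * t)) (2 * π) := by
  intro t
  change Complex.exp (-Complex.I * k * ((t + 2 * π : ℝ) : ℂ)) = Complex.exp (-Complex.I * k * t)
  rw [Complex.exp_eq_exp_iff_exists_int]
  refine ⟨-k, ?_⟩
  push_cast
  ring

lemma integral_shift {F : ℝ → ℂ} (hF : Function.Periodic F (2 * π)) (k : ℤ) (τ : ℝ) :
    ∫ t in (τ - π)..(τ + π), F t * Complex.exp (-Complex.I * k * t) =
      2 * π * fourierCoef F k := by
  have hpi' : (π : ℂ) ≠ 0 := by exact_mod_cast Real.pi_ne_zero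
  have h := (hF.mul (periodic_char k)).intervalIntegral_add_eq (τ - π) 0
  have e : τ - π + 2 * π = τ + π := by ring
  rw [e, zero_add] at h
  unfold fourierCoef
  simp only [Pi.mul_apply] at h
  rw [h]
  field_simp

lemma conv_bound {F : ℝ → ℂ} (hF : Function.Periodic F (2 * π))
    (hint : IntervalIntegrable F volume 0 (2 * π)) {w : ℝ} (hw : 0 < w) (hwp : w < π)
    (τ : ℝ) (k : ℤ) :
    ‖∫ t in (τ - π)..(τ + π), F t * Complex.exp (-Complex.I * k * t) * (tri w (t - τ) : ℂ)‖ₑ ≤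
      ENNReal.ofReal (2 * π) *
        ∑' m : ℤ, ENNReal.ofReal (triCoef w m) * (‖fourierCoef F (k - m)‖₊ : ℝ≥0∞) := by
  have hpi := Real.pi_pos
  have hi : IntervalIntegrable F volume (τ - π) (τ + π) := by
    apply hF.intervalIntegrable (t := 0) (by positivity)
    rwa [zero_add]
  have hsum : HasSum (fun m : ℤ => ∫ t in (τ - π)..(τ + π),
      F t * Complex.exp (-Complex.I * k * t) *
        ((triCoef w m : ℂ) * Complex.exp (Complex.I * m * ((t - τ : ℝ) : ℂ))))
      (∫ t in (τ - π)..(τ + π), F t * Complex.exp (-Complex.I * k * t) * (tri w (t - τ) : ℂ)) := by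
    apply intervalIntegral.hasSum_integral_of_dominated_convergence
      (fun m t => ‖F t‖ * triCoef w m)
    · intro m
      have h1 : AEStronglyMeasurable F (volume.restrict (uIoc (τ - π) (τ + π))) :=
        hi.aestronglyMeasurable_restrict_uIoc
      refine (h1.mul (Continuous.aestronglyMeasurable ?_)).mul
        (Continuous.aestronglyMeasurable ?_) <;> fun_prop
    · intro m
      filter_upwards with t ht
      have e1 : ‖Complex.exp (-Complex.I * k * t)‖ = 1 := by
        rw [Complex.norm_exp]; simp
      have e2 : ‖Complex.exp (Complex.I * m * ((t - τ : ℝ) : ℂ))‖ = 1 := by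
        rw [Complex.norm_exp]; simp
      rw [norm_mul, norm_mul, norm_mul, e1, e2, Complex.norm_real, Real.norm_eq_abs,
        abs_of_nonneg (triCoef_nonneg hw m)]
      simp
    · filter_upwards with t ht
      exact (triCoef_summable hw).mul_left _
    · simp_rw [tsum_mul_left]
      exact hi.norm.mul_const _
    · filter_upwards with t ht
      rw [uIoc_of_le (by linarith)] at ht
      exact (tri_hasSum hw hwp (t := t - τ)
        ⟨by linarith [ht.1], by linarith [ht.2]⟩).mul_left _
  have hterm : ∀ m : ℤ, ‖∫ t in (τ - π)..(τ + π),
      F t * Complex.exp (-Complex.I * k * t) *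
        ((triCoef w m : ℂ) * Complex.exp (Complex.I * m * ((t - τ : ℝ) : ℂ)))‖ₑ =
      ENNReal.ofReal (2 * π) *
        (ENNReal.ofReal (triCoef w m) * (‖fourierCoef F (k - m)‖₊ : ℝ≥0∞)) := by
    intro m
    have e : ∫ t in (τ - π)..(τ + π), F t * Complex.exp (-Complex.I * k * t) *
        ((triCoef w m : ℂ) * Complex.exp (Complex.I * m * ((t - τ : ℝ) : ℂ))) =
        ((triCoef w m : ℂ) * Complex.exp (-Complex.I * m * τ)) *
          ∫ t in (τ - π)..(τ + π), F t * Complex.exp (-Complex.I * ((k - m : ℤ) : ℂ) * t) := by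
      rw [← intervalIntegral.integral_const_mul]
      apply intervalIntegral.integral_congr
      intro t _
      have : Complex.exp (-Complex.I * k * t) * Complex.exp (Complex.I * m * ((t - τ : ℝ) : ℂ)) =
        Complex.exp (-Complex.I * m * τ) * Complex.exp (-Complex.I * ((k - m : ℤ) : ℂ) * t) := by
        rw [← Complex.exp_add, ← Complex.exp_add]
        congr 1
        push_cast
        ring
      linear_combination (F t * (triCoef w m : ℂ)) * this
    rw [e, integral_shift hF]
    have e1 : ‖Complex.exp (-Complex.I * m * τ)‖ₑ = 1 := by
      rw [← ofReal_norm, Complex.norm_exp]; simp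
    have e2 : ‖(triCoef w m : ℂ)‖ₑ = ENNReal.ofReal (triCoef w m) := by
      rw [← ofReal_norm, Complex.norm_real, Real.norm_eq_abs,
        abs_of_nonneg (triCoef_nonneg hw m)]
    have e3 : ‖(2 * π : ℂ)‖ₑ = ENNReal.ofReal (2 * π) := by
      rw [← ofReal_norm]
      congr 1
      rw [norm_mul, Complex.norm_real, Real.norm_eq_abs, abs_of_pos hpi]
      simp
    rw [enorm_mul, enorm_mul, enorm_mul, e1, e2, e3, enorm_eq_nnnorm]
    ring
  rw [← hsum.tsum_eq, ← ENNReal.tsum_mul_left]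
  simp_rw [← hterm]
  exact enorm_tsum_le_tsum_enorm

lemma jensen_tsum {p : ℝ} (hp : 1 ≤ p) (a f : ℤ → ℝ≥0∞) (ha : ∑' m, a m = 1) :
    (∑' m, a m * f m) ^ p ≤ ∑' m, a m * f m ^ p := by
  have hp0 : 0 < p := by linarith
  have key : ∑' m, a m * f m ≤ (∑' m, a m * f m ^ p) ^ p⁻¹ := by
    rw [ENNReal.tsum_eq_iSup_sum]
    apply iSup_le
    intro s
    refine (ENNReal.inner_le_weight_mul_Lp_of_nonneg s hp a f).trans ?_
    have h1 : (∑ i ∈ s, a i) ^ (1 - p⁻¹) ≤ 1 := by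
      apply ENNReal.rpow_le_one
      · rw [← ha]; exact ENNReal.sum_le_tsum s
      · have := inv_le_one_of_one_le₀ hp
        linarith
    calc _ ≤ 1 * (∑ i ∈ s, a i * f i ^ p) ^ p⁻¹ := by gcongr
      _ ≤ _ := by
        rw [one_mul]
        exact ENNReal.rpow_le_rpow (ENNReal.sum_le_tsum s) (by positivity)
  calc _ ≤ ((∑' m, a m * f m ^ p) ^ p⁻¹) ^ p := ENNReal.rpow_le_rpow key hp0.le
    _ = _ := by rw [← ENNReal.rpow_mul, inv_mul_cancel₀ hp0.ne', ENNReal.rpow_one]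

lemma young_tsum {p : ℝ} (hp : 1 ≤ p) (a f : ℤ → ℝ≥0∞) (ha : ∑' m, a m = 1) :
    ∑' k, (∑' m, a m * f (k - m)) ^ p ≤ ∑' k, f k ^ p := by
  calc _ ≤ ∑' k, ∑' m, a m * f (k - m) ^ p :=
        ENNReal.tsum_le_tsum fun k => jensen_tsum hp a (fun m => f (k - m)) ha
    _ = ∑' m, ∑' k, a m * f (k - m) ^ p := ENNReal.tsum_comm
    _ = ∑' m, a m * ∑' k, f k ^ p := by
        congr 1; ext m
        rw [ENNReal.tsum_mul_left]
        congr 1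
        exact (Equiv.subRight m).tsum_eq (fun k => f k ^ p)
    _ = _ := by rw [ENNReal.tsum_mul_right, ha, one_mul]

/-- A lower bound for all coefficients in a finite set gives a lower bound for the norm. -/
lemma norm_lower {p : ℝ} (hp : 1 ≤ p) {F : ℝ → ℂ} (hF : Function.Periodic F (2 * π))
    (hint : IntervalIntegrable F volume 0 (2 * π)) {w : ℝ} (hw : 0 < w) (hwp : w < π)
    (K : Finset ℤ) (β : ℝ) (N : ℝ) (hN : 0 ≤ N) (hNK : N ≤ K.card)
    (hK : ∀ k ∈ K, ∃ τ : ℝ, β ≤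
      ‖∫ t in (τ - π)..(τ + π), F t * Complex.exp (-Complex.I * k * t) * (tri w (t - τ) : ℂ)‖) :
    ENNReal.ofReal (N ^ (1 / p) * (β / (2 * π))) ≤ ApNorm p F := by
  have hpi := Real.pi_pos
  have hp0 : 0 < p := by linarith
  have ha : ∑' m : ℤ, ENNReal.ofReal (triCoef w m) = 1 := by
    rw [← ENNReal.ofReal_tsum_of_nonneg (triCoef_nonneg hw) (triCoef_summable hw),
      (triCoef_hasSum hw hwp).tsum_eq, ENNReal.ofReal_one]
  have hy := young_tsum hp (fun m : ℤ => ENNReal.ofReal (triCoef w m))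
    (fun m => (‖fourierCoef F m‖₊ : ℝ≥0∞)) ha
  have hpt : ∀ k ∈ K, ENNReal.ofReal (β / (2 * π)) ≤
      ∑' m : ℤ, ENNReal.ofReal (triCoef w m) * (‖fourierCoef F (k - m)‖₊ : ℝ≥0∞) := by
    intro k hk
    obtain ⟨τ, hτ⟩ := hK k hk
    have h1 := conv_bound hF hint hw hwp τ k
    have h2 : ENNReal.ofReal β ≤ _ := (ENNReal.ofReal_le_ofReal hτ).trans
      ((ofReal_norm _).le.trans h1)
    rw [ENNReal.ofReal_div_of_pos (by positivity)]
    exact ENNReal.div_le_of_le_mul' h2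
  have hsum : ENNReal.ofReal N * ENNReal.ofReal (β / (2 * π)) ^ p ≤
      ∑' k : ℤ, ((‖fourierCoef F k‖₊ : ℝ≥0∞) ^ p) := by
    refine le_trans ?_ hy
    refine le_trans ?_ (ENNReal.sum_le_tsum K)
    calc _ ≤ (K.card : ℝ≥0∞) * ENNReal.ofReal (β / (2 * π)) ^ p := by
          gcongr
          rw [← ENNReal.ofReal_natCast]
          exact ENNReal.ofReal_le_ofReal hNK
      _ = ∑ k ∈ K, ENNReal.ofReal (β / (2 * π)) ^ p := by
          rw [Finset.sum_const, nsmul_eq_mul]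
      _ ≤ _ := Finset.sum_le_sum fun k hk => ENNReal.rpow_le_rpow (hpt k hk) hp0.le
  unfold ApNorm
  refine le_trans (le_of_eq ?_) (ENNReal.rpow_le_rpow hsum (by positivity : 0 ≤ 1 / p))
  rw [ENNReal.mul_rpow_of_nonneg _ _ (by positivity), ← ENNReal.rpow_mul,
    mul_one_div_cancel hp0.ne', ENNReal.rpow_one, ENNReal.ofReal_mul (by positivity),
    ENNReal.ofReal_rpow_of_nonneg hN (by positivity)]

/-- A phase close to constant on the support of the triangle yields a large integral. -/
lemma integral_lower {w : ℝ} (hw : 0 < w) (hwp : w < π) (τ : ℝ) (H : ℝ → ℂ)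
    (hH : IntervalIntegrable H volume (τ - π) (τ + π)) (z : ℂ) (hz : ‖z‖ = 1)
    (hre : ∀ t, |t - τ| ≤ w → 1 / 2 ≤ (z * H t).re) :
    w / 2 ≤ ‖∫ t in (τ - π)..(τ + π), H t * (tri w (t - τ) : ℂ)‖ := by
  have hpi := Real.pi_pos
  have htc : Continuous fun t => tri w (t - τ) := (tri_continuous w).comp (by fun_prop)
  have hi : IntervalIntegrable (fun t => z * (H t * (tri w (t - τ) : ℂ))) volume
      (τ - π) (τ + π) :=
    (hH.mul_continuousOn (Complex.continuous_ofReal.comp htc).continuousOn).const_mul z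
  have e : ∫ t in (τ - π)..(τ + π), (1 / 2) * tri w (t - τ) = w / 2 := by
    rw [intervalIntegral.integral_const_mul, intervalIntegral.integral_comp_sub_right (tri w)]
    have := tri_integral hw hwp
    rw [show τ - π - τ = -π by ring, show τ + π - τ = π by ring, this]
    ring
  have h1 : w / 2 ≤ ∫ t in (τ - π)..(τ + π), (z * (H t * (tri w (t - τ) : ℂ))).re := by
    rw [← e]
    apply intervalIntegral.integral_mono_on (by linarith)
    · exact Continuous.intervalIntegrable (by fun_prop) _ _
    · exact ⟨hi.1.re, hi.2.re⟩
    · intro t _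
      by_cases ht : |t - τ| ≤ w
      · rw [← mul_assoc, Complex.re_mul_ofReal]
        exact mul_le_mul_of_nonneg_right (hre t ht) (tri_nonneg _ _)
      · rw [tri_zero_of_le hw (not_le.1 ht).le]; simp
  have h2 : ∫ t in (τ - π)..(τ + π), (z * (H t * (tri w (t - τ) : ℂ))).re =
      (∫ t in (τ - π)..(τ + π), z * (H t * (tri w (t - τ) : ℂ))).re := by
    rw [intervalIntegral.integral_of_le (by linarith), intervalIntegral.integral_of_le (by linarith)]
    exact integral_re hi.1
  rw [h2, intervalIntegral.integral_const_mul] at h1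
  calc _ ≤ _ := h1
    _ ≤ ‖z * ∫ t in (τ - π)..(τ + π), H t * (tri w (t - τ) : ℂ)‖ := Complex.re_le_norm _
    _ = _ := by rw [norm_mul, hz, one_mul]

lemma taylor_bound {u v : ℝ} {φ φ' : ℝ → ℝ}
    (hφ : ∀ t ∈ Icc u v, HasDerivWithinAt φ (φ' t) (Icc u v) t) (M r : ℝ)
    {t₀ t : ℝ} (ht₀ : t₀ ∈ Icc u v) (ht : t ∈ Icc u v) (htr : |t - t₀| ≤ r)
    (hM : ∀ s ∈ Icc u v, |s - t₀| ≤ r → |φ' s - φ' t₀| ≤ M) :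
    |φ t - φ t₀ - φ' t₀ * (t - t₀)| ≤ M * |t - t₀| := by
  have hsub : uIcc t₀ t ⊆ Icc u v := (convex_Icc u v).ordConnected.uIcc_subset ht₀ ht
  have hd : ∀ s ∈ uIcc t₀ t, HasDerivWithinAt (fun s => φ s - φ' t₀ * s)
      (φ' s - φ' t₀) (uIcc t₀ t) s := by
    intro s hs
    have h2 := (hasDerivWithinAt_id s (uIcc t₀ t)).const_mul (φ' t₀)
    rw [mul_one] at h2
    exact ((hφ s (hsub hs)).mono hsub).sub h2
  have := (convex_uIcc t₀ t).norm_image_sub_le_of_norm_hasDerivWithin_le (C := M) hd (by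
    intro s hs
    exact hM s (hsub hs) ((abs_sub_left_of_mem_uIcc hs).trans htr)) left_mem_uIcc right_mem_uIcc
  simp only [Real.norm_eq_abs] at this
  calc _ = |φ t - φ' t₀ * t - (φ t₀ - φ' t₀ * t₀)| := by congr 1; ring
    _ ≤ _ := this

lemma exists_deriv_ne {u v : ℝ} (huv : u < v) {φ φ' : ℝ → ℝ}
    (hφ : ∀ t ∈ Icc u v, HasDerivWithinAt φ (φ' t) (Icc u v) t)
    (hnl : ¬ ∃ a b : ℝ, ∀ t ∈ Icc u v, φ t = a * t + b) :
    ∃ s ∈ Icc u v, φ' s ≠ φ' u := by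
  by_contra! h
  apply hnl
  refine ⟨φ' u, φ u - φ' u * u, fun t ht => ?_⟩
  have hu : u ∈ Icc u v := ⟨le_rfl, huv.le⟩
  have := taylor_bound hφ 0 |t - u| hu ht le_rfl (by
    intro s hs _
    rw [h s hs]; simp)
  rw [zero_mul, abs_nonpos_iff] at this
  linarith

/-- Theorem 1′, local version: if φ ∈ C^{1,ω}(I) is nonlinear on an
interval I = [u,v] of length < 2π, then every F ∈ A_p(𝕋) (2π-periodic, integrable)
restricting to e^{iλφ} on I has A_p norm ≥ c·|λ|^{1/p}·χ^{-1}(1/|λ|). -/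
theorem statement1
    (p : ℝ) (hp1 : 1 ≤ p) (hp2 : p < 2)
    -- ω is a modulus of continuity: continuous non-decreasing on [0,∞), ω(0)=0, ω(δ)>0 for δ>0,
    -- with χ(δ) = δ·ω(δ) strictly increasing and unbounded, and χinv its inverse.
    (ω : ℝ → ℝ)
    (hω_cont : ContinuousOn ω (Ici 0)) (hω_mono : MonotoneOn ω (Ici 0))
    (hω_zero : ω 0 = 0) (hω_pos : ∀ δ : ℝ, 0 < δ → 0 < ω δ)
    (hχ_mono : StrictMonoOn (fun δ => δ * ω δ) (Ici 0))
    (hχ_unbdd : ∀ y : ℝ, ∃ δ : ℝ, 0 ≤ δ ∧ y < δ * ω δ)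
    (χinv : ℝ → ℝ)
    (hχinv_left : ∀ δ : ℝ, 0 ≤ δ → χinv (δ * ω δ) = δ)
    (hχinv_right : ∀ y : ℝ, 0 ≤ y → 0 ≤ χinv y ∧ χinv y * ω (χinv y) = y)
    (u v : ℝ) (huv : u < v) (hlen : v - u < 2 * Real.pi)
    (φ : ℝ → ℝ) (φ' : ℝ → ℝ)
    (hφ_deriv : ∀ t ∈ Icc u v, HasDerivWithinAt φ (φ' t) (Icc u v) t)
    (hφ'_cont : ContinuousOn φ' (Icc u v))
    (hφ_lip : ∃ C : ℝ, 0 < C ∧ ∀ s ∈ Icc u v, ∀ t ∈ Icc u v, |φ' s - φ' t| ≤ C * ω |s - t|)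
    (hφ_nonlinear : ¬ ∃ a b : ℝ, ∀ t ∈ Icc u v, φ t = a * t + b) :
    ∃ c : ℝ, 0 < c ∧ ∀ lam : ℝ, 1 ≤ |lam| →
      ∀ F : ℝ → ℂ, Function.Periodic F (2 * Real.pi) →
        IntervalIntegrable F volume 0 (2 * Real.pi) →
        (∀ t ∈ Icc u v, F t = Complex.exp (Complex.I * (lam : ℂ) * (φ t : ℂ))) →
        ENNReal.ofReal (c * |lam| ^ (1 / p) * χinv (1 / |lam|)) ≤ ApNorm p F := by
  obtain ⟨C, hC, hlip⟩ := hφ_lip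
  have hpi := Real.pi_pos
  have hp0 : 0 < p := by linarith
  obtain ⟨s, hs, hsne⟩ := exists_deriv_ne huv hφ_deriv hφ_nonlinear
  set D := |φ' s - φ' u| with hD
  have hDpos : 0 < D := abs_pos.2 (sub_ne_zero.2 hsne)
  obtain ⟨hδ1nn, hδ1⟩ := hχinv_right 1 zero_le_one
  set δ1 := χinv 1
  have hδ1pos : 0 < δ1 := by
    rcases hδ1nn.lt_or_eq with h | h
    · exact h
    · rw [← h, zero_mul] at hδ1; norm_num at hδ1
  obtain ⟨ε, hε, hε1, hε2, hε3, hε4⟩ : ∃ ε : ℝ, 0 < ε ∧ 2 * ε ≤ 1 ∧ 2 * ε * C ≤ 1 / 2 ∧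
      2 * (ε * δ1) ≤ 1 / 2 ∧ ε * δ1 ≤ (v - u) / 2 := by
    have huv' : 0 < v - u := sub_pos.2 huv
    refine ⟨min (min (1 / 2) (1 / (4 * C))) (min (1 / (4 * δ1)) ((v - u) / (2 * δ1))),
      by positivity, ?_, ?_, ?_, ?_⟩
    · have := (min_le_left _ _).trans (min_le_left _ _) |>.trans_eq' (rfl :
        min (min (1 / 2) (1 / (4 * C))) (min (1 / (4 * δ1)) ((v - u) / (2 * δ1))) = _)
      linarith
    · have : min (min (1 / 2) (1 / (4 * C))) (min (1 / (4 * δ1)) ((v - u) / (2 * δ1))) ≤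
        1 / (4 * C) := (min_le_left _ _).trans (min_le_right _ _)
      rw [le_div_iff₀ (by positivity)] at this
      linarith
    · have : min (min (1 / 2) (1 / (4 * C))) (min (1 / (4 * δ1)) ((v - u) / (2 * δ1))) ≤
        1 / (4 * δ1) := (min_le_right _ _).trans (min_le_left _ _)
      rw [le_div_iff₀ (by positivity)] at this
      linarith
    · have : min (min (1 / 2) (1 / (4 * C))) (min (1 / (4 * δ1)) ((v - u) / (2 * δ1))) ≤
        (v - u) / (2 * δ1) := (min_le_right _ _).trans (min_le_right _ _)
      rw [le_div_iff₀ (by positivity)] at this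
      linarith
  refine ⟨D ^ (1 / p) * (ε / (4 * π)), by positivity, ?_⟩
  intro lam hlam F hFper hFint hFeq
  have hlam0 : 0 < |lam| := by linarith
  obtain ⟨hδnn, hδ⟩ := hχinv_right (1 / |lam|) (by positivity)
  set δ := χinv (1 / |lam|)
  have hδpos : 0 < δ := by
    rcases hδnn.lt_or_eq with h | h
    · exact h
    · rw [← h, zero_mul] at hδ
      have : 0 < 1 / |lam| := by positivity
      linarith
  have hδle : δ ≤ δ1 := by
    rw [← hχ_mono.le_iff_le hδnn hδ1nn]
    change δ * ω δ ≤ δ1 * ω δ1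
    rw [hδ, hδ1, div_le_one hlam0]
    exact hlam
  set w := ε * δ with hw_def
  have hw : 0 < w := by positivity
  have hwδ1 : w ≤ ε * δ1 := mul_le_mul_of_nonneg_left hδle hε.le
  have hwp : w < π := by linarith
  have hwδ : 2 * w ≤ δ := by nlinarith
  have hosc : |lam| * (C * ω δ * (2 * w)) ≤ 1 / 2 := by
    have : |lam| * (C * ω δ * (2 * w)) = 2 * ε * C * (|lam| * (δ * ω δ)) := by
      rw [hw_def]; ring
    rw [this, hδ, mul_one_div_cancel hlam0.ne', mul_one]
    exact hε2
  have hFi : ∀ τ : ℝ, IntervalIntegrable F volume (τ - π) (τ + π) := by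
    intro τ
    apply hFper.intervalIntegrable (t := 0) (by positivity)
    rwa [zero_add]
  have hu : u ∈ Icc u v := ⟨le_rfl, huv.le⟩
  -- the set of frequencies
  set A := min (lam * φ' u) (lam * φ' s) with hA
  set B := max (lam * φ' u) (lam * φ' s) with hB
  have hAB : A ≤ B := min_le_max
  have hBA : B - A = D * |lam| := by
    rw [hA, hB, max_sub_min_eq_abs', hD, abs_sub_comm, ← mul_sub, abs_mul, mul_comm]
  have hiv : ∀ μ ∈ Icc A B, ∃ t₀ ∈ Icc u v, lam * φ' t₀ = μ := by
    intro μ hμ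
    have hsub : uIcc u s ⊆ Icc u v := (convex_Icc u v).ordConnected.uIcc_subset hu hs
    have hc : ContinuousOn (fun t => lam * φ' t) (uIcc u s) :=
      (continuousOn_const.mul hφ'_cont).mono hsub
    obtain ⟨t₀, ht₀, h⟩ := intermediate_value_uIcc hc hμ
    exact ⟨t₀, hsub ht₀, h⟩
  have hK : ∀ k ∈ Finset.Icc ⌊A⌋ ⌊B⌋, ∃ τ : ℝ, w / 2 ≤
      ‖∫ t in (τ - π)..(τ + π), F t * Complex.exp (-Complex.I * k * t) * (tri w (t - τ) : ℂ)‖ := by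
    intro k hk
    rw [Finset.mem_Icc] at hk
    have hkB : (k : ℝ) ≤ B := Int.le_floor.1 hk.2
    have hkA : A - 1 ≤ k := by
      have h1 := Int.lt_floor_add_one A
      have h2 : ((⌊A⌋ : ℤ) : ℝ) ≤ k := by exact_mod_cast hk.1
      linarith
    obtain ⟨t₀, ht₀, hμ⟩ := hiv (max A k) ⟨le_max_left _ _, max_le hAB hkB⟩
    have hkμ : |lam * φ' t₀ - k| ≤ 1 := by
      rw [hμ, abs_le]
      constructor
      · linarith [le_max_right A (k:ℝ)]
      · have : max A (k:ℝ) ≤ k + 1 := max_le (by linarith) (by linarith)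
        linarith
    -- centre of the triangle
    obtain ⟨τ, hτ1, hτ2, hτ3⟩ : ∃ τ : ℝ, u + w ≤ τ ∧ τ ≤ v - w ∧ |τ - t₀| ≤ w := by
      refine ⟨max (u + w) (min (v - w) t₀), le_max_left _ _,
        max_le (by linarith) (min_le_left _ _), ?_⟩
      rw [abs_le]
      constructor
      · have : t₀ - w ≤ min (v - w) t₀ := le_min (by linarith [ht₀.2]) (by linarith)
        linarith [le_max_right (u + w) (min (v - w) t₀)]
      · have : max (u + w) (min (v - w) t₀) ≤ t₀ + w :=
          max_le (by linarith [ht₀.1]) ((min_le_right _ _).trans (by linarith))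
        linarith
    refine ⟨τ, integral_lower hw hwp τ (fun t => F t * Complex.exp (-Complex.I * k * t))
      ((hFi τ).mul_continuousOn (by fun_prop))
      (Complex.exp (((k * t₀ - lam * φ t₀ : ℝ) : ℂ) * Complex.I))
      (Complex.norm_exp_ofReal_mul_I _) ?_⟩
    intro t ht
    have htI : t ∈ Icc u v := by
      rw [abs_le] at ht
      exact ⟨by linarith [ht.1], by linarith [ht.2]⟩
    have htt : |t - t₀| ≤ 2 * w := by
      calc |t - t₀| ≤ |t - τ| + |τ - t₀| := abs_sub_le _ _ _
        _ ≤ 2 * w := by linarith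
    set θ : ℝ := lam * (φ t - φ t₀ - φ' t₀ * (t - t₀)) + (lam * φ' t₀ - k) * (t - t₀) with hθ
    have heq : Complex.exp (((k * t₀ - lam * φ t₀ : ℝ) : ℂ) * Complex.I) *
        (F t * Complex.exp (-Complex.I * k * t)) = Complex.exp ((θ : ℂ) * Complex.I) := by
      rw [hFeq t htI, ← Complex.exp_add, ← Complex.exp_add, hθ]
      congr 1
      push_cast
      ring
    rw [heq, Complex.exp_ofReal_mul_I_re]
    have hωδ : 0 < ω δ := hω_pos δ hδpos
    have htay := taylor_bound hφ_deriv (C * ω δ) (2 * w) ht₀ htI htt (by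
      intro s' hs' hsr
      refine (hlip s' hs' t₀ ht₀).trans ?_
      gcongr
      exact hω_mono (mem_Ici.2 (abs_nonneg _)) (mem_Ici.2 hδnn) (hsr.trans hwδ))
    have hθ1 : |θ| ≤ 1 := by
      calc |θ| ≤ |lam * (φ t - φ t₀ - φ' t₀ * (t - t₀))| + |(lam * φ' t₀ - k) * (t - t₀)| :=
            abs_add_le _ _
        _ = |lam| * |φ t - φ t₀ - φ' t₀ * (t - t₀)| + |lam * φ' t₀ - k| * |t - t₀| := by
            rw [abs_mul, abs_mul]
        _ ≤ |lam| * (C * ω δ * (2 * w)) + 1 * (2 * w) := by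
            gcongr
            exact htay.trans (by gcongr)
        _ ≤ 1 := by linarith
    have hcos := Real.one_sub_sq_div_two_le_cos (x := θ)
    have : θ ^ 2 ≤ 1 := by
      rw [← sq_abs]
      exact pow_le_one₀ (abs_nonneg _) hθ1
    linarith
  have hcard : D * |lam| ≤ ((Finset.Icc ⌊A⌋ ⌊B⌋).card : ℝ) := by
    rw [← hBA, Int.card_Icc]
    have h1 : ((⌊B⌋ + 1 - ⌊A⌋ : ℤ) : ℝ) ≤ ((⌊B⌋ + 1 - ⌊A⌋).toNat : ℝ) := by
      exact_mod_cast Int.self_le_toNat _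
    push_cast at h1
    linarith [Int.lt_floor_add_one B, Int.floor_le A]
  have hfin := norm_lower hp1 hFper hFint hw hwp _ (w / 2) (D * |lam|) (by positivity) hcard hK
  refine le_trans (le_of_eq ?_) hfin
  congr 1
  rw [Real.mul_rpow hDpos.le hlam0.le, hw_def]
  ring
end

section
/- Let 0 < α ≤ 1. If φ is a real-valued, non-constant, 2π-periodic function of class C^{1,α}(𝕋) (i.e., φ is C¹ and φ′ satisfies a Lipschitz condition of order α), then for every p with 1 ≤ p < 1+α there is a constant c_p > 0 such that ‖e^{iλφ}‖_{A_p(𝕋)} ≥ c_p · |λ|^{1/p − 1/(1+α)} for all λ ∈ ℝ. In particular ‖e^{iλφ}‖_{A_1(𝕋)} ≥ c · |λ|^{α/(1+α)}. -/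
open MeasureTheory Real Set
open scoped ENNReal

/-- Trigonometric polynomial with real coefficients. -/
noncomputable def trigP (N : ℕ) (w : ℕ → ℝ) (t : ℝ) : ℂ :=
  ∑ a ∈ Finset.range N, (w a : ℂ) * Complex.exp (Complex.I * (a : ℂ) * (t : ℂ))

lemma trigP_cont (N : ℕ) (w : ℕ → ℝ) : Continuous (trigP N w) := by
  unfold trigP; fun_prop

lemma trigP_sq (N : ℕ) (w : ℕ → ℝ) (t : ℝ) :
    ((‖trigP N w t‖ ^ 2 : ℝ) : ℂ) = ∑ a ∈ Finset.range N, ∑ b ∈ Finset.range N,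
      ((w a * w b : ℝ) : ℂ) * Complex.exp (Complex.I * (((a : ℤ) - (b : ℤ) : ℤ) : ℂ) * (t : ℂ)) := by
  have h := Complex.mul_conj (trigP N w t)
  rw [Complex.normSq_eq_norm_sq] at h
  rw [← h]
  unfold trigP
  rw [map_sum, Finset.sum_mul_sum]
  refine Finset.sum_congr rfl fun a _ => Finset.sum_congr rfl fun b _ => ?_
  rw [map_mul, ← Complex.exp_conj]
  simp only [map_mul, Complex.conj_I, Complex.conj_ofReal, map_natCast]
  rw [mul_mul_mul_comm, ← Complex.exp_add]
  push_cast
  congr 2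
  ring

lemma int_exp (m : ℤ) : ∫ t in (0:ℝ)..(2 * Real.pi), Complex.exp (Complex.I * (m : ℂ) * (t : ℂ))
    = if m = 0 then 2 * (Real.pi : ℂ) else 0 := by
  split_ifs with h
  · subst h; simp
  · have hc : Complex.I * (m : ℂ) ≠ 0 := by
      simp [h]
    rw [integral_exp_mul_complex hc]
    have : Complex.exp (Complex.I * m * ((2 * Real.pi : ℝ) : ℂ)) = 1 := by
      rw [Complex.exp_eq_one_iff]
      exact ⟨m, by push_cast; ring⟩
    rw [this]; simp

lemma parseval (N : ℕ) (w : ℕ → ℝ) :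
    ∫ t in (0:ℝ)..(2 * Real.pi), ‖trigP N w t‖ ^ 2
      = 2 * Real.pi * ∑ a ∈ Finset.range N, w a ^ 2 := by
  apply Complex.ofReal_injective
  rw [← intervalIntegral.integral_ofReal]
  simp_rw [trigP_sq]
  rw [intervalIntegral.integral_finsetSum]
  · push_cast
    rw [Finset.mul_sum]
    refine Finset.sum_congr rfl fun a ha => ?_
    rw [intervalIntegral.integral_finsetSum]
    · rw [Finset.sum_eq_single a]
      · simp; ring
      · intro b _ hb
        rw [intervalIntegral.integral_const_mul]
        have := int_exp ((a : ℤ) - b)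
        push_cast at this
        rw [this, if_neg (by omega)]; simp
      · intro h; exact absurd ha h
    · intro b _
      apply Continuous.intervalIntegrable; fun_prop
  · intro b _
    apply Continuous.intervalIntegrable; fun_prop

lemma upper (f : ℝ → ℂ) (hf : Continuous f) (N : ℕ) (w : ℕ → ℝ) (hw : ∀ a, 0 ≤ w a ) (k : ℤ) (τ : ℝ) :
    ‖∫ t in (0:ℝ)..(2 * Real.pi), f t * Complex.exp (-Complex.I * (k : ℂ) * (t : ℂ))
        * ((‖trigP N w (t - τ)‖ ^ 2 : ℝ) : ℂ)‖
      ≤ 2 * Real.pi * ∑ a ∈ Finset.range N, ∑ b ∈ Finset.range N,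
        w a * w b * ‖fourierCoef f (k - ((a : ℤ) - (b : ℤ)))‖ := by
  have hkey : ∀ a b : ℕ, ∀ t : ℝ, f t * Complex.exp (-Complex.I * (k : ℂ) * (t : ℂ)) *
      (((w a * w b : ℝ) : ℂ) * Complex.exp (Complex.I * (((a : ℤ) - (b : ℤ) : ℤ) : ℂ) * ((t - τ : ℝ) : ℂ)))
      = (((w a * w b : ℝ) : ℂ) * Complex.exp ((-(((a : ℤ) - (b : ℤ) : ℤ) * τ) : ℝ) * Complex.I)) *
       (f t * Complex.exp (-Complex.I * ((k - ((a : ℤ) - (b : ℤ)) : ℤ) : ℂ) * (t : ℂ))) := by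
    intro a b t
    have : Complex.exp (-Complex.I * (k : ℂ) * (t : ℂ)) * Complex.exp (Complex.I * (((a : ℤ) - (b : ℤ) : ℤ) : ℂ) * ((t - τ : ℝ) : ℂ)) = Complex.exp ((-(((a : ℤ) - (b : ℤ) : ℤ) * τ) : ℝ) * Complex.I) * Complex.exp (-Complex.I * ((k - ((a : ℤ) - (b : ℤ)) : ℤ) : ℂ) * (t : ℂ)) := by
      rw [← Complex.exp_add, ← Complex.exp_add]
      congr 1
      push_cast; ring
    linear_combination (f t * ((w a * w b : ℝ) : ℂ)) * this
  simp_rw [trigP_sq, Finset.mul_sum]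
  rw [intervalIntegral.integral_finsetSum]
  · refine (norm_sum_le _ _).trans (Finset.sum_le_sum fun a _ => ?_)
    rw [intervalIntegral.integral_finsetSum]
    · refine (norm_sum_le _ _).trans (Finset.sum_le_sum fun b _ => ?_)
      simp_rw [hkey]
      rw [intervalIntegral.integral_const_mul, norm_mul, norm_mul, Complex.norm_exp_ofReal_mul_I]
      rw [Complex.norm_real, Real.norm_of_nonneg (mul_nonneg (hw a) (hw b))]
      unfold fourierCoef
      rw [norm_mul]
      have : ‖(1 / (2 * (Real.pi : ℂ)))‖ = 1 / (2 * Real.pi) := by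
        simp [abs_of_pos Real.pi_pos]
      rw [this]
      apply le_of_eq
      have := Real.pi_pos
      field_simp
    · intro b _
      apply Continuous.intervalIntegrable; fun_prop
  · intro b _
    apply Continuous.intervalIntegrable; fun_prop

lemma wsum (N m : ℕ) : ∑ a ∈ Finset.range m, ((a:ℝ) * (N - a)) ^ 2 =
    (N:ℝ)^2 * (m * (m-1) * (2*m-1) / 6) - 2 * N * (m * (m-1)/2)^2
      + (m * (m-1) * (2*m-1) * (3 * m^2 - 3 * m - 1) / 30) := by
  induction m with
  | zero => simp
  | succ n ih => rw [Finset.sum_range_succ, ih]; push_cast; ring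

lemma dsum (N m : ℕ) : ∑ a ∈ Finset.range m, ((a:ℝ) * (N - a) - (a+1) * (N - (a+1))) ^ 2 =
    m * ((N:ℝ)-1)^2 - 4 * (N-1) * (m * (m-1)/2) + 4 * (m * (m-1) * (2*m-1) / 6)  := by
  induction m with
  | zero => simp
  | succ n ih => rw [Finset.sum_range_succ, ih]; push_cast; ring

/-- weights -/
noncomputable def wt (N : ℕ) (a : ℕ) : ℝ := if a ≤ N then (a:ℝ) * (N - a) else 0

lemma wt_nonneg (N a : ℕ) : 0 ≤ wt N a := by
  unfold wt; split_ifs with h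
  · have : (a:ℝ) ≤ N := by exact_mod_cast h
    exact mul_nonneg (by positivity) (by linarith)
  · rfl

lemma wt_Q (N : ℕ) : ∑ a ∈ Finset.range N, wt N a ^ 2 = N * ((N:ℝ)^4 - 1) / 30 := by
  have : ∑ a ∈ Finset.range N, wt N a ^ 2 = ∑ a ∈ Finset.range N, ((a:ℝ) * (N - a)) ^ 2 :=
    Finset.sum_congr rfl fun a ha => by
      rw [wt, if_pos (Finset.mem_range.1 ha).le]
  rw [this, wsum]; ring

lemma wt_R (N : ℕ) : ∑ a ∈ Finset.range N, (wt N a - wt N (a+1)) ^ 2 = N * ((N:ℝ)^2 - 1) / 3 := by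
  have : ∑ a ∈ Finset.range N, (wt N a - wt N (a+1)) ^ 2 = ∑ a ∈ Finset.range N, ((a:ℝ) * (N - a) - (a+1) * (N - (a+1))) ^ 2 :=
    Finset.sum_congr rfl fun a ha => by
      rw [wt, wt, if_pos (Finset.mem_range.1 ha).le, if_pos (Nat.succ_le_of_lt (Finset.mem_range.1 ha))]; push_cast; rfl
  rw [this, dsum]; ring

lemma trigP_mul (N : ℕ) (t : ℝ) : ‖(Complex.exp (Complex.I * (t:ℂ)) - 1) * trigP N (wt N) t‖ ^ 2
    = ‖trigP N (fun a => wt N a - wt N (a+1)) t‖ ^ 2 := by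
  have h1 : trigP N (wt N) t = ∑ a ∈ Finset.range N, (wt N (a+1) : ℂ) * Complex.exp (Complex.I * ((a+1 : ℕ) : ℂ) * (t : ℂ)) := by
    unfold trigP
    have e1 := Finset.sum_range_succ (fun a : ℕ => (wt N a : ℂ) * Complex.exp (Complex.I * (a : ℂ) * (t : ℂ))) N
    have e2 := Finset.sum_range_succ' (fun a : ℕ => (wt N a : ℂ) * Complex.exp (Complex.I * (a : ℂ) * (t : ℂ))) N
    have w0 : wt N 0 = 0 := by simp [wt]
    have wN : wt N N = 0 := by simp [wt]
    rw [wN] at e1; rw [w0, e1] at e2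
    simpa using e2
  have h2 : (Complex.exp (Complex.I * (t:ℂ)) - 1) * trigP N (wt N) t
     = Complex.exp (Complex.I * (t:ℂ)) * trigP N (fun a => wt N a - wt N (a+1)) t := by
    rw [sub_mul, one_mul]
    nth_rw 2 [h1]
    unfold trigP
    rw [Finset.mul_sum, Finset.mul_sum, ← Finset.sum_sub_distrib]
    refine Finset.sum_congr rfl fun a _ => ?_
    have : Complex.exp (Complex.I * ((a+1 : ℕ) : ℂ) * (t : ℂ)) = Complex.exp (Complex.I * (t:ℂ)) * Complex.exp (Complex.I * (a : ℂ) * (t : ℂ)) := by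
      rw [← Complex.exp_add]; congr 1; push_cast; ring
    rw [this]; push_cast; ring
  rw [h2, norm_mul]
  have : ‖Complex.exp (Complex.I * (t:ℂ))‖ = 1 := by
    rw [mul_comm]; exact Complex.norm_exp_ofReal_mul_I t
  rw [this, one_mul]

lemma taylor (α C : ℝ) (hα0 : 0 < α) (hC : 0 < C) (φ : ℝ → ℝ) (hφ_C1 : ContDiff ℝ 1 φ)
    (h : ∀ s t : ℝ, |deriv φ s - deriv φ t| ≤ C * |s - t| ^ α) (τ u : ℝ) :
    |φ (u + τ) - φ τ - deriv φ τ * u| ≤ C * |u| ^ (1 + α) := by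
  have hd : Differentiable ℝ φ := hφ_C1.differentiable (by norm_num)
  have := Convex.norm_image_sub_le_of_norm_hasDerivWithin_le (f := fun x => φ x - deriv φ τ * x)
    (f' := fun x => deriv φ x - deriv φ τ) (s := uIcc τ (u + τ)) (C := C * |u| ^ α) (x := τ) (y := u + τ)
    (fun x _ => by
      have := ((hd x).hasDerivAt.sub ((hasDerivAt_id x).const_mul (deriv φ τ))).hasDerivWithinAt (s := uIcc τ (u + τ))
      simp only [mul_one, id] at this
      exact this) (fun x hx => by
      rw [Real.norm_eq_abs]
      refine (h x τ).trans ?_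
      have : |x - τ| ≤ |u| := by
        have := Set.abs_sub_left_of_mem_uIcc hx
        simpa using this
      gcongr) (convex_uIcc _ _) left_mem_uIcc right_mem_uIcc
  simp only [Real.norm_eq_abs] at this
  calc _ = |φ (u + τ) - deriv φ τ * (u + τ) - (φ τ - deriv φ τ * τ)| := by congr 1; ring
    _ ≤ _ := this
    _ = _ := by
      rw [Real.rpow_add' (abs_nonneg _) (by linarith), Real.rpow_one]
      have : |u + τ - τ| = |u| := by congr 1; ring
      rw [this]; ring

lemma trigP_per (N : ℕ) (w : ℕ → ℝ) : Function.Periodic (trigP N w) (2 * Real.pi) := by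
  intro t
  unfold trigP
  refine Finset.sum_congr rfl fun a _ => ?_
  congr 1
  rw [Complex.exp_eq_exp_iff_exists_int]
  exact ⟨a, by push_cast; ring⟩

lemma parseval' (N : ℕ) (w : ℕ → ℝ) :
    ∫ t in (-Real.pi)..Real.pi, ‖trigP N w t‖ ^ 2
      = 2 * Real.pi * ∑ a ∈ Finset.range N, w a ^ 2 := by
  rw [← parseval]
  have hp : Function.Periodic (fun t => ‖trigP N w t‖ ^ 2) (2 * Real.pi) := by
    intro t; simp only [trigP_per N w t]
  have := hp.intervalIntegral_add_eq (-Real.pi) 0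
  rw [zero_add] at this
  rw [← this]; congr 1; ring

lemma abs_le_exp (u : ℝ) (hu : |u| ≤ Real.pi) :
    u ^ 2 ≤ Real.pi ^ 2 / 4 * ‖Complex.exp (Complex.I * (u:ℂ)) - 1‖ ^ 2 := by
  have h := Real.mul_abs_le_abs_sin (x := u / 2) (by rw [abs_div, abs_two]; linarith)
  rw [Complex.norm_exp_I_mul_ofReal_sub_one, Real.norm_eq_abs, abs_mul, abs_two, ← sq_abs u]
  rw [abs_div, abs_two] at h
  have hpi := Real.pi_pos
  have h2 : |u| ≤ Real.pi / 2 * (2 * |Real.sin (u / 2)|) := by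
    have : Real.pi * (2 / Real.pi * (|u| / 2)) = |u| := by field_simp
    nlinarith
  calc |u| ^ 2 ≤ (Real.pi / 2 * (2 * |Real.sin (u / 2)|)) ^ 2 := by gcongr
    _ = _ := by ring

lemma lower (α C : ℝ) (hα0 : 0 < α) (hC : 0 < C) (φ : ℝ → ℝ)
    (hφ_per : ∀ t : ℝ, φ (t + 2 * Real.pi) = φ t) (hφ_C1 : ContDiff ℝ 1 φ)
    (h : ∀ s t : ℝ, |deriv φ s - deriv φ t| ≤ C * |s - t| ^ α) (lam τ : ℝ) (k : ℤ)
    (hk : lam * deriv φ τ = k) (δ : ℝ) (hδ : 0 < δ) (hδ1 : δ ≤ 1)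
    (hlam : |lam| * C * δ ^ (1 + α) ≤ 1 / 2) (N : ℕ) (hN : 15 / δ ≤ N) :
    2 * Real.pi * ((∑ a ∈ Finset.range N, wt N a ^ 2) / 4) ≤
    ‖∫ t in (0:ℝ)..(2 * Real.pi), Complex.exp (Complex.I * (lam : ℂ) * (φ t : ℂ))
       * Complex.exp (-Complex.I * (k : ℂ) * (t : ℂ))
        * ((‖trigP N (wt N) (t - τ)‖ ^ 2 : ℝ) : ℂ)‖ := by
  have hφc : Continuous φ := hφ_C1.continuous
  have hPc := trigP_cont N (wt N)
  have hRc := trigP_cont N (fun a => wt N a - wt N (a+1))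
  have hpi := Real.pi_pos
  set H : ℝ → ℂ := fun t => Complex.exp (Complex.I * (lam : ℂ) * (φ t : ℂ))
       * Complex.exp (-Complex.I * (k : ℂ) * (t : ℂ))
        * ((‖trigP N (wt N) (t - τ)‖ ^ 2 : ℝ) : ℂ) with hH
  have hper : Function.Periodic H (2 * Real.pi) := by
    intro t
    simp only [hH, hφ_per]
    have e1 : t + 2 * Real.pi - τ = (t - τ) + 2 * Real.pi := by ring
    rw [e1, trigP_per N (wt N) (t - τ)]
    congr 2
    rw [Complex.exp_eq_exp_iff_exists_int]
    exact ⟨-k, by push_cast; ring⟩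
  have hshift : ∫ t in (0:ℝ)..(2 * Real.pi), H t = ∫ u in (-Real.pi)..Real.pi, H (u + τ) := by
    rw [intervalIntegral.integral_comp_add_right]
    have := hper.intervalIntegral_add_eq 0 (-Real.pi + τ)
    rw [zero_add] at this
    rw [this]; congr 1; ring
  set ψ : ℝ → ℝ := fun u => lam * (φ (u + τ) - φ τ - deriv φ τ * u) with hψ
  have hψc : Continuous ψ := by simp only [hψ]; fun_prop
  have hHu : ∀ u, H (u + τ) = Complex.exp ((lam * φ τ - k * τ : ℝ) * Complex.I) *
      (Complex.exp (Complex.I * (ψ u : ℂ)) * ((‖trigP N (wt N) u‖ ^ 2 : ℝ) : ℂ)) := by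
    intro u
    simp only [hH, add_sub_cancel_right]
    rw [← mul_assoc, ← Complex.exp_add, ← Complex.exp_add]
    congr 2
    simp only [hψ, ← hk, ← Complex.ofReal_intCast]
    push_cast; ring
  have hsplit : ∀ u, (Complex.exp (Complex.I * (ψ u : ℂ)) * ((‖trigP N (wt N) u‖ ^ 2 : ℝ) : ℂ))
     = ((‖trigP N (wt N) u‖ ^ 2 : ℝ) : ℂ) +
       (Complex.exp (Complex.I * (ψ u : ℂ)) - 1) * ((‖trigP N (wt N) u‖ ^ 2 : ℝ) : ℂ) := by
    intro u; ring
  rw [hshift]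
  simp_rw [hHu]
  rw [intervalIntegral.integral_const_mul, norm_mul, Complex.norm_exp_ofReal_mul_I, one_mul]
  simp_rw [hsplit]
  rw [intervalIntegral.integral_add (by apply Continuous.intervalIntegrable; fun_prop)
    (by apply Continuous.intervalIntegrable; fun_prop), intervalIntegral.integral_ofReal, parseval']
  set Q := ∑ a ∈ Finset.range N, wt N a ^ 2 with hQ
  set R := ∑ a ∈ Finset.range N, (wt N a - wt N (a+1)) ^ 2 with hR
  have hQ0 : 0 ≤ Q := Finset.sum_nonneg fun _ _ => sq_nonneg _
  have hpt : ∀ u ∈ Icc (-Real.pi) Real.pi, ‖(Complex.exp (Complex.I * (ψ u : ℂ)) - 1) * ((‖trigP N (wt N) u‖ ^ 2 : ℝ) : ℂ)‖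
     ≤ 1 / 2 * ‖trigP N (wt N) u‖ ^ 2 + Real.pi ^ 2 / (2 * δ ^ 2) * ‖trigP N (fun a => wt N a - wt N (a+1)) u‖ ^ 2 := by
    intro u hu
    rw [← trigP_mul, norm_mul, norm_mul, Complex.norm_real, norm_pow, norm_norm, mul_pow, ← mul_assoc, ← add_mul]
    refine mul_le_mul_of_nonneg_right ?_ (by positivity)
    have hu2 := abs_le_exp u (abs_le.2 hu)
    by_cases hd : |u| ≤ δ
    · have h1 : ‖Complex.exp (Complex.I * (ψ u : ℂ)) - 1‖ ≤ 1 / 2 := by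
        refine Real.norm_exp_I_mul_ofReal_sub_one_le.trans ?_
        rw [Real.norm_eq_abs]
        simp only [hψ]
        rw [abs_mul]
        calc _ ≤ |lam| * (C * |u| ^ (1 + α)) := by
              gcongr; exact taylor α C hα0 hC φ hφ_C1 h τ u
          _ ≤ |lam| * (C * δ ^ (1 + α)) := by gcongr
          _ ≤ _ := by linarith
      have : 0 ≤ Real.pi ^ 2 / (2 * δ ^ 2) * ‖Complex.exp (Complex.I * (u : ℂ)) - 1‖ ^ 2 := by positivity
      linarith
    · have h1 : ‖Complex.exp (Complex.I * (ψ u : ℂ)) - 1‖ ≤ 2 := by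
        refine (norm_sub_le _ _).trans ?_
        rw [mul_comm, Complex.norm_exp_ofReal_mul_I]; norm_num
      have h2 : δ ^ 2 ≤ u ^ 2 := by
        rw [← sq_abs u]; push Not at hd; gcongr
      have h3 : 2 ≤ Real.pi ^ 2 / (2 * δ ^ 2) * ‖Complex.exp (Complex.I * (u : ℂ)) - 1‖ ^ 2 := by
        rw [div_mul_eq_mul_div, le_div_iff₀ (by positivity)]
        linarith
      linarith
  have hE : ‖∫ u in (-Real.pi)..Real.pi, (Complex.exp (Complex.I * (ψ u : ℂ)) - 1) * ((‖trigP N (wt N) u‖ ^ 2 : ℝ) : ℂ)‖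
     ≤ 1 / 2 * (2 * Real.pi * Q) + Real.pi ^ 2 / (2 * δ ^ 2) * (2 * Real.pi * R) := by
    refine (intervalIntegral.norm_integral_le_integral_norm (by linarith)).trans ?_
    rw [hQ, hR, ← parseval' N (wt N), ← parseval' N (fun a => wt N a - wt N (a+1)), ← intervalIntegral.integral_const_mul, ← intervalIntegral.integral_const_mul, ← intervalIntegral.integral_add
     (by apply Continuous.intervalIntegrable; fun_prop)
    (by apply Continuous.intervalIntegrable; fun_prop)]
    refine intervalIntegral.integral_mono_on (by linarith) (by apply Continuous.intervalIntegrable; fun_prop) (by apply Continuous.intervalIntegrable; fun_prop) hpt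
  have hRQ : Real.pi ^ 2 / (2 * δ ^ 2) * R ≤ Q / 4 := by
    have e1 : R * ((N:ℝ)^2 + 1) = 10 * Q := by
      rw [hQ, hR, wt_Q, wt_R]; ring
    have hR0 : 0 ≤ R := Finset.sum_nonneg fun _ _ => sq_nonneg _
    rw [div_le_iff₀ hδ] at hN
    have e2 : 225 ≤ (N:ℝ)^2 * δ^2 := by nlinarith
    have e3 : Real.pi ^ 2 ≤ 10 := by nlinarith [Real.pi_lt_d2]
    rw [div_mul_eq_mul_div, div_le_iff₀ (by positivity)]
    have e4 : R * 225 ≤ R * ((N:ℝ)^2 * δ^2) := by gcongr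
    have e5 : R * (N:ℝ)^2 * δ^2 ≤ 10 * Q * δ ^ 2 := by rw [← e1]; gcongr; linarith
    nlinarith
  have htri := norm_sub_norm_le (((2 * Real.pi * Q : ℝ)) : ℂ) (-(∫ u in (-Real.pi)..Real.pi, (Complex.exp (Complex.I * (ψ u : ℂ)) - 1) * ((‖trigP N (wt N) u‖ ^ 2 : ℝ) : ℂ)))
  rw [norm_neg, sub_neg_eq_add, Complex.norm_real, Real.norm_of_nonneg (by positivity)] at htri
  refine le_trans ?_ htri
  nlinarith

lemma young_s2 (S : Finset ℤ) (p : ℝ) (hp : 1 ≤ p) (x : ℤ → ℝ≥0∞) (N : ℕ) (w : ℕ → ℝ≥0∞)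
    (hw : ∀ a, w a ≠ ∞) (A : ℝ≥0∞)
    (hA : ∀ k ∈ S, A ≤ ∑ a ∈ Finset.range N, ∑ b ∈ Finset.range N, w a * w b * x (k - ((a:ℤ) - (b:ℤ)))) :
    (S.card : ℝ≥0∞) * A ^ p ≤ ((∑ a ∈ Finset.range N, w a) ^ 2) ^ p * ∑' k, x k ^ p := by
  set I := Finset.range N ×ˢ Finset.range N
  set W := ∑ ab ∈ I, w ab.1 * w ab.2 with hW
  have hW2 : (∑ a ∈ Finset.range N, w a) ^ 2 = W := by
    rw [hW, sq, Finset.sum_mul_sum, Finset.sum_product]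
  have hp0 : 0 < p := by linarith
  have hWt : W ≠ ∞ := by
    rw [hW]; exact ENNReal.sum_ne_top.2 fun _ _ => ENNReal.mul_ne_top (hw _) (hw _)
  have hk : ∀ k ∈ S, A ^ p ≤ W ^ (p - 1) * ∑ ab ∈ I, w ab.1 * w ab.2 * x (k - ((ab.1:ℤ) - (ab.2:ℤ))) ^ p := by
    intro k hkS
    have h1 := hA k hkS
    rw [← Finset.sum_product (f := fun ab : ℕ × ℕ => w ab.1 * w ab.2 * x (k - ((ab.1:ℤ) - (ab.2:ℤ))))] at h1
    have h2 := ENNReal.inner_le_weight_mul_Lp_of_nonneg I hp (fun ab => w ab.1 * w ab.2) (fun ab => x (k - ((ab.1:ℤ) - (ab.2:ℤ))))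
    have h3 := ENNReal.rpow_le_rpow (h1.trans h2) hp0.le
    rw [ENNReal.mul_rpow_of_nonneg _ _ hp0.le, ← ENNReal.rpow_mul, ← ENNReal.rpow_mul, inv_mul_cancel₀ hp0.ne', ENNReal.rpow_one] at h3
    have : (1 - p⁻¹) * p = p - 1 := by field_simp
    rwa [this] at h3
  rw [hW2]
  calc (S.card : ℝ≥0∞) * A ^ p = ∑ k ∈ S, A ^ p := by simp
    _ ≤ ∑ k ∈ S, W ^ (p - 1) * ∑ ab ∈ I, w ab.1 * w ab.2 * x (k - ((ab.1:ℤ) - (ab.2:ℤ))) ^ p :=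
      Finset.sum_le_sum hk
    _ = W ^ (p - 1) * ∑ ab ∈ I, w ab.1 * w ab.2 * ∑ k ∈ S, x (k - ((ab.1:ℤ) - (ab.2:ℤ))) ^ p := by
      rw [← Finset.mul_sum, Finset.sum_comm]
      simp_rw [Finset.mul_sum]
    _ ≤ W ^ (p - 1) * ∑ ab ∈ I, w ab.1 * w ab.2 * ∑' k, x k ^ p := by
      gcongr with ab _
      refine (ENNReal.sum_le_tsum S).trans ?_
      exact ENNReal.tsum_comp_le_tsum_of_injective (f := fun k : ℤ => k - ((ab.1:ℤ) - (ab.2:ℤ))) (fun a b hab => by simpa using hab) (fun k => x k ^ p)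
    _ = W ^ p * ∑' k, x k ^ p := by
      rw [← Finset.sum_mul, ← hW, ← mul_assoc]
      congr 1
      rcases eq_or_ne W 0 with h0 | h0
      · rw [h0, mul_zero, ENNReal.zero_rpow_of_pos hp0]
      · nth_rw 2 [← ENNReal.rpow_one W]
        rw [← ENNReal.rpow_add _ _ h0 hWt]; congr 1; ring

/-- Core inequality. -/
lemma core (α C : ℝ) (hα0 : 0 < α) (hC : 0 < C) (φ : ℝ → ℝ)
    (hφ_per : ∀ t : ℝ, φ (t + 2 * Real.pi) = φ t) (hφ_C1 : ContDiff ℝ 1 φ)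
    (h : ∀ s t : ℝ, |deriv φ s - deriv φ t| ≤ C * |s - t| ^ α) (lam : ℝ) (S : Finset ℤ)
    (hS : ∀ k ∈ S, ∃ τ, lam * deriv φ τ = k) (δ : ℝ) (hδ : 0 < δ) (hδ1 : δ ≤ 1)
    (hlam : |lam| * C * δ ^ (1 + α) ≤ 1 / 2) (p : ℝ) (hp : 1 ≤ p) :
    ENNReal.ofReal ((S.card : ℝ) ^ (1 / p) * (δ / 64)) ≤
      ApNorm p (fun t => Complex.exp (Complex.I * (lam : ℂ) * (φ t : ℂ))) := by
  have hp0 : 0 < p := by linarith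
  have hφc : Continuous φ := hφ_C1.continuous
  have hpi := Real.pi_pos
  set f : ℝ → ℂ := fun t => Complex.exp (Complex.I * (lam : ℂ) * (φ t : ℂ)) with hf
  have hfc : Continuous f := by simp only [hf]; fun_prop
  set N : ℕ := ⌈15 / δ⌉₊ with hNdef
  have hN : 15 / δ ≤ N := Nat.le_ceil _
  have hδi : 1 ≤ 1 / δ := by rw [le_div_iff₀ hδ]; linarith
  have hN2 : (N:ℝ) ≤ 16 / δ := by
    have := (Nat.ceil_lt_add_one (show 0 ≤ 15 / δ by positivity)).le
    have e : 16 / δ = 15 / δ + 1 / δ := by ring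
    rw [e]; linarith
  have hN15 : (15:ℝ) ≤ N := by
    have e : 15 / δ = 15 * (1 / δ) := by ring
    rw [e] at hN; linarith
  set Q := ∑ a ∈ Finset.range N, wt N a ^ 2 with hQ
  have hQ0 : 0 < Q := by
    rw [hQ, wt_Q]
    have : (1:ℝ) < (N:ℝ)^4 := one_lt_pow₀ (by linarith) (by norm_num)
    apply div_pos (mul_pos (by linarith) (by linarith)) (by norm_num)
  have hmain := young_s2 S p hp (fun k => (‖fourierCoef f k‖₊ : ℝ≥0∞)) N (fun a => ENNReal.ofReal (wt N a))
    (fun a => ENNReal.ofReal_ne_top) (ENNReal.ofReal (Q / 4)) (by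
      intro k hk
      obtain ⟨τ, hτ⟩ := hS k hk
      have h1 := (lower α C hα0 hC φ hφ_per hφ_C1 h lam τ k hτ δ hδ hδ1 hlam N hN).trans
        (upper f hfc N (wt N) (wt_nonneg N) k τ)
      have h2 := le_of_mul_le_mul_left h1 (by positivity)
      refine (ENNReal.ofReal_le_ofReal h2).trans (le_of_eq ?_)
      rw [ENNReal.ofReal_sum_of_nonneg]
      · refine Finset.sum_congr rfl fun a _ => ?_
        rw [ENNReal.ofReal_sum_of_nonneg]
        · refine Finset.sum_congr rfl fun b _ => ?_
          rw [ENNReal.ofReal_mul (mul_nonneg (wt_nonneg _ _) (wt_nonneg _ _)), ENNReal.ofReal_mul (wt_nonneg _ _),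
            ofReal_norm]
          rfl
        · exact fun b _ => mul_nonneg (mul_nonneg (wt_nonneg _ _) (wt_nonneg _ _)) (norm_nonneg _)
      · exact fun a _ => Finset.sum_nonneg fun b _ => mul_nonneg (mul_nonneg (wt_nonneg _ _) (wt_nonneg _ _)) (norm_nonneg _))
  have hWle : (∑ a ∈ Finset.range N, ENNReal.ofReal (wt N a)) ^ 2 ≤ ENNReal.ofReal (N * Q) := by
    rw [← ENNReal.ofReal_sum_of_nonneg (fun a _ => wt_nonneg N a), ← ENNReal.ofReal_pow (Finset.sum_nonneg fun a _ => wt_nonneg N a)]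
    apply ENNReal.ofReal_le_ofReal
    have := sq_sum_le_card_mul_sum_sq (s := Finset.range N) (f := wt N)
    simpa using this
  have h5 := hmain.trans (mul_le_mul_left (ENNReal.rpow_le_rpow hWle hp0.le) _)
  have h6 := ENNReal.rpow_le_rpow h5 (show 0 ≤ 1 / p by positivity)
  rw [ENNReal.mul_rpow_of_nonneg _ _ (by positivity), ENNReal.mul_rpow_of_nonneg _ _ (by positivity),
    ← ENNReal.rpow_mul, ← ENNReal.rpow_mul, mul_one_div_cancel hp0.ne', ENNReal.rpow_one, ENNReal.rpow_one] at h6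
  change _ ≤ _ * ApNorm p f at h6
  have h7 : ENNReal.ofReal (N * Q) * ENNReal.ofReal ((S.card : ℝ) ^ (1 / p) * (δ / 64)) ≤ ENNReal.ofReal (N * Q) * ApNorm p f := by
    refine le_trans ?_ h6
    rw [← ENNReal.ofReal_natCast S.card, ENNReal.ofReal_rpow_of_nonneg (by positivity) (by positivity),
      ← ENNReal.ofReal_mul (by positivity), ← ENNReal.ofReal_mul (by positivity)]
    apply ENNReal.ofReal_le_ofReal
    have : (N:ℝ) * δ ≤ 16 := by rwa [le_div_iff₀ hδ] at hN2
    calc (N:ℝ) * Q * ((S.card : ℝ) ^ (1 / p) * (δ / 64)) = (S.card : ℝ) ^ (1 / p) * Q / 64 * (N * δ) := by ring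
      _ ≤ (S.card : ℝ) ^ (1 / p) * Q / 64 * 16 := by gcongr
      _ = _ := by ring
  have hNQ : 0 < N * Q := mul_pos (by linarith) hQ0
  exact (ENNReal.mul_le_mul_iff_right (ENNReal.ofReal_pos.2 hNQ).ne' ENNReal.ofReal_ne_top).1 h7

lemma freqs (φ : ℝ → ℝ) (hφ_per : ∀ t : ℝ, φ (t + 2 * Real.pi) = φ t) (hφ_C1 : ContDiff ℝ 1 φ)
    (hφ_nonconst : ∃ s t : ℝ, φ s ≠ φ t) :
    ∃ d : ℝ, 0 < d ∧ ∀ lam : ℝ, ∃ S : Finset ℤ, (∀ k ∈ S, ∃ τ, lam * deriv φ τ = k) ∧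
      1 ≤ (S.card : ℝ) ∧ |lam| * d ≤ S.card := by
  have hd : Differentiable ℝ φ := hφ_C1.differentiable (by norm_num)
  have hdc : Continuous (deriv φ) := hφ_C1.continuous_deriv (by norm_num)
  obtain ⟨ξ, hξ⟩ : ∃ ξ, deriv φ ξ = 0 := by
    obtain ⟨c, _, hc⟩ := exists_deriv_eq_zero (f := φ) (a := 0) (b := 2 * Real.pi) (by positivity)
      hφ_C1.continuous.continuousOn (by have := hφ_per 0; rw [zero_add] at this; exact this.symm)
    exact ⟨c, hc⟩
  obtain ⟨η, hη⟩ : ∃ η, deriv φ η ≠ 0 := by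
    by_contra! hcon
    obtain ⟨s, t, hst⟩ := hφ_nonconst
    exact hst (is_const_of_deriv_eq_zero hd hcon s t)
  refine ⟨|deriv φ η|, abs_pos.2 hη, fun lam => ?_⟩
  set M := ⌊|lam| * |deriv φ η|⌋₊ with hM
  obtain ⟨s, hs0, hs⟩ : ∃ s : ℤ, s ≠ 0 ∧ (s:ℝ) * (|lam| * |deriv φ η|) = lam * deriv φ η := by
    rw [← abs_mul]
    rcases le_total 0 (lam * deriv φ η) with h0 | h0
    · exact ⟨1, by norm_num, by rw [abs_of_nonneg h0]; simp⟩
    · exact ⟨-1, by norm_num, by rw [abs_of_nonpos h0]; simp⟩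
  have hcard : ((Finset.range (M+1)).image (fun j : ℕ => s * (j:ℤ))).card = M + 1 := by
    rw [Finset.card_image_of_injective, Finset.card_range]
    intro a b hab
    have := mul_left_cancel₀ hs0 hab
    exact_mod_cast this
  refine ⟨(Finset.range (M+1)).image (fun j : ℕ => s * (j:ℤ)), ?_, ?_, ?_⟩
  · intro k hk
    obtain ⟨j, hj, rfl⟩ := Finset.mem_image.1 hk
    have hjM : (j:ℝ) ≤ |lam| * |deriv φ η| :=
      (Nat.le_floor_iff (by positivity)).1 (Nat.lt_succ_iff.1 (Finset.mem_range.1 hj))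
    have hcont : ContinuousOn (fun τ => lam * deriv φ τ) (uIcc ξ η) := by fun_prop
    have hiv := intermediate_value_uIcc hcont
    have hmem : ((s * (j:ℤ) : ℤ) : ℝ) ∈ uIcc (lam * deriv φ ξ) (lam * deriv φ η) := by
      rw [hξ, mul_zero, ← hs]
      push_cast
      have h0 : (0:ℝ) ≤ j := by positivity
      rcases le_total 0 (s:ℝ) with h1 | h1
      · rw [uIcc_of_le (by positivity)]
        exact ⟨by positivity, by gcongr⟩
      · rw [uIcc_of_ge (mul_nonpos_of_nonpos_of_nonneg h1 (by positivity))]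
        exact ⟨mul_le_mul_of_nonpos_left hjM h1, mul_nonpos_of_nonpos_of_nonneg h1 h0⟩
    obtain ⟨τ, _, hτ⟩ := hiv hmem
    exact ⟨τ, hτ⟩
  · rw [hcard]; push_cast; linarith [Nat.cast_nonneg (α := ℝ) M]
  · rw [hcard]; push_cast; exact (Nat.lt_floor_add_one _).le

theorem statement2
    (α : ℝ) (hα0 : 0 < α) (hα1 : α ≤ 1)
    (φ : ℝ → ℝ)
    (hφ_per : ∀ t : ℝ, φ (t + 2 * Real.pi) = φ t)
    (hφ_C1 : ContDiff ℝ 1 φ)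
    (hφ_lip : ∃ C : ℝ, 0 < C ∧ ∀ s t : ℝ, |deriv φ s - deriv φ t| ≤ C * |s - t| ^ α)
    (hφ_nonconst : ∃ s t : ℝ, φ s ≠ φ t)
    (p : ℝ) (hp1 : 1 ≤ p) (hp2 : p < 1 + α) :
    ∃ c : ℝ, 0 < c ∧ ∀ lam : ℝ,
      ENNReal.ofReal (c * |lam| ^ (1 / p - 1 / (1 + α))) ≤
        ApNorm p (fun t => Complex.exp (Complex.I * (lam : ℂ) * (φ t : ℂ))) := by
  obtain ⟨C, hC, h⟩ := hφ_lip
  obtain ⟨d, hd, hfr⟩ := freqs φ hφ_per hφ_C1 hφ_nonconst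
  have hp0 : 0 < p := by linarith
  set q := 1 / (1 + α) with hq
  have hq0 : 0 < q := by positivity
  have hex : 0 < 1 / p - q := by
    rw [sub_pos, hq]; exact one_div_lt_one_div_of_lt hp0 hp2
  set c := min 1 (d ^ (1 / p)) * ((1 + 2 * C) ^ (-q) / 64) with hc
  refine ⟨c, by positivity, fun lam => ?_⟩
  obtain ⟨S, hS, hS1, hS2⟩ := hfr lam
  set δ := (1 + 2 * C * |lam|) ^ (-q) with hδ
  have hB : 1 ≤ 1 + 2 * C * |lam| := by
    have : 0 ≤ 2 * C * |lam| := by positivity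
    linarith
  have hδ0 : 0 < δ := by positivity
  have hδ1 : δ ≤ 1 := Real.rpow_le_one_of_one_le_of_nonpos hB (by linarith)
  have hlam : |lam| * C * δ ^ (1 + α) ≤ 1 / 2 := by
    rw [hδ, ← Real.rpow_mul (by linarith)]
    have : -q * (1 + α) = -1 := by rw [hq]; field_simp
    rw [this, Real.rpow_neg_one, ← div_eq_mul_inv, div_le_iff₀ (by linarith)]
    linarith
  refine le_trans (ENNReal.ofReal_le_ofReal ?_) (core α C hα0 hC φ hφ_per hφ_C1 h lam S hS δ hδ0 hδ1 hlam p hp1)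
  rcases le_total |lam| 1 with hl | hl
  · have e1 : |lam| ^ (1 / p - q) ≤ 1 := Real.rpow_le_one (abs_nonneg _) hl hex.le
    have e2 : (1 + 2 * C) ^ (-q) ≤ δ :=
      Real.rpow_le_rpow_of_nonpos (by linarith) (by nlinarith) (by linarith)
    have e3 : 1 ≤ (S.card : ℝ) ^ (1 / p) := Real.one_le_rpow hS1 (by positivity)
    calc c * |lam| ^ (1 / p - q) ≤ c * 1 := by gcongr
      _ ≤ 1 * ((1 + 2 * C) ^ (-q) / 64) := by rw [hc, mul_one]; gcongr; exact min_le_left _ _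
      _ ≤ _ := by gcongr
  · have hl0 : 0 < |lam| := by linarith
    have e2 : (1 + 2 * C) ^ (-q) * |lam| ^ (-q) ≤ δ := by
      rw [← Real.mul_rpow (by positivity) (by positivity)]
      exact Real.rpow_le_rpow_of_nonpos (by linarith) (by nlinarith) (by linarith)
    have e3 : |lam| ^ (1 / p) * d ^ (1 / p) ≤ (S.card : ℝ) ^ (1 / p) := by
      rw [← Real.mul_rpow (by positivity) (by positivity)]
      exact Real.rpow_le_rpow (by positivity) hS2 (by positivity)
    calc c * |lam| ^ (1 / p - q) ≤ (d ^ (1 / p)) * ((1 + 2 * C) ^ (-q) / 64) * |lam| ^ (1 / p - q) := by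
          rw [hc]; gcongr; exact min_le_right _ _
      _ = (|lam| ^ (1 / p) * d ^ (1 / p)) * (((1 + 2 * C) ^ (-q) * |lam| ^ (-q)) / 64) := by
          rw [sub_eq_add_neg, Real.rpow_add hl0]; ring
      _ ≤ _ := by gcongr
end
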